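/- arXiv:1509.02563 — 2 statements merged into one kernel-verified Lean document; each statement's English description precedes it below -/
import Mathlib

section
/- Every planar triangulation on n ≥ 4 vertices contains at most n − 4 separating triangles. -/
/-- A straight-line (plane) embedding of a simple graph: vertices map injectively
to points of the plane, no vertex lies on the interior of an edge, and two
distinct edges intersect only in shared endpoints. -/
def IsPlanarEmbedding {n : ℕ} (G : SimpleGraph (Fin n))
    (p : Fin n → EuclideanSpace ℝ (Fin 2)) : Prop :=
  Function.Injective p ∧
  (∀ u v w : Fin n, G.Adj u v → p w ∈ segment ℝ (p u) (p v) → w = u ∨ w = v) ∧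
  (∀ u v x y : Fin n, G.Adj u v → G.Adj x y → ({u, v} : Set (Fin n)) ≠ {x, y} →
    segment ℝ (p u) (p v) ∩ segment ℝ (p x) (p y) ⊆
      p '' (({u, v} : Set (Fin n)) ∩ {x, y}))

/-- A graph is planar if it admits a straight-line plane embedding (Fáry). -/
def IsPlanar {n : ℕ} (G : SimpleGraph (Fin n)) : Prop :=
  ∃ p : Fin n → EuclideanSpace ℝ (Fin 2), IsPlanarEmbedding G p

/-- A (planar) triangulation is a maximal simple planar graph. -/
def IsTriangulation {n : ℕ} (G : SimpleGraph (Fin n)) : Prop :=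
  IsPlanar G ∧ ∀ u v : Fin n, u ≠ v → ¬ G.Adj u v →
    ¬ IsPlanar (G ⊔ SimpleGraph.fromEdgeSet {s(u, v)})

/-- A separating triangle: three mutually adjacent vertices whose removal
disconnects the graph. -/
def IsSepTriangle {n : ℕ} (G : SimpleGraph (Fin n)) (a b c : Fin n) : Prop :=
  G.Adj a b ∧ G.Adj b c ∧ G.Adj a c ∧
  ¬ (G.induce {v : Fin n | v ∉ ({a, b, c} : Set (Fin n))}).Connected

/-- 4-connectivity: no vertex cutset of size at most 3. -/
def FourConnected {n : ℕ} (G : SimpleGraph (Fin n)) : Prop :=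
  ∀ S : Finset (Fin n), S.card ≤ 3 → (G.induce {v : Fin n | v ∉ S}).Connected


/-! ### Oriented areas and barycentric coordinates in the plane -/

/-- The Euclidean plane. -/
abbrev Plane := EuclideanSpace ℝ (Fin 2)

/-- Twice the signed area of the triangle `x y z`. -/
def orient (x y z : Plane) : ℝ :=
  (y 0 - x 0) * (z 1 - x 1) - (y 1 - x 1) * (z 0 - x 0)

lemma orient_combo (x y u v : Plane) {s t : ℝ} (h : s + t = 1) :
    orient x y (s • u + t • v) = s * orient x y u + t * orient x y v := by
  obtain rfl : s = 1 - t := by linarith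
  simp only [orient, PiLp.add_apply, PiLp.smul_apply, smul_eq_mul]
  ring

lemma orient_rotate (x y z : Plane) : orient y z x = orient x y z := by
  simp only [orient]; ring

lemma orient_swap (x y z : Plane) : orient y x z = -orient x y z := by
  simp only [orient]; ring

@[simp] lemma orient_self_left (x z : Plane) : orient x x z = 0 := by simp [orient]

@[simp] lemma orient_self_right (x y : Plane) : orient x y y = 0 := by
  simp only [orient]; ring

@[simp] lemma orient_self_outer (x y : Plane) : orient x y x = 0 := by
  simp only [orient]; ring

lemma exists_combo_of_orient_eq_zero {a b c : Plane} (hab : a ≠ b) (h : orient a b c = 0) :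
    ∃ k : ℝ, c = (1 - k) • a + k • b := by
  simp only [orient] at h
  by_cases h0 : b 0 - a 0 = 0
  · have h1 : b 1 - a 1 ≠ 0 := by
      intro h1
      apply hab
      ext i
      fin_cases i
      · exact (sub_eq_zero.mp h0).symm
      · exact (sub_eq_zero.mp h1).symm
    refine ⟨(c 1 - a 1) / (b 1 - a 1), ?_⟩
    have h2 : c 0 - a 0 = 0 := by
      rw [h0, zero_mul, zero_sub, neg_eq_zero] at h
      exact (mul_eq_zero.mp h).resolve_left h1
    ext i
    fin_cases i
    · simp only [Fin.zero_eta, PiLp.add_apply, PiLp.smul_apply, smul_eq_mul]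
      have : b 0 = a 0 := by linarith
      rw [this]; linarith
    · simp only [Fin.mk_one, PiLp.add_apply, PiLp.smul_apply, smul_eq_mul]
      field_simp
      ring
  · refine ⟨(c 0 - a 0) / (b 0 - a 0), ?_⟩
    ext i
    fin_cases i
    · simp only [Fin.zero_eta, PiLp.add_apply, PiLp.smul_apply, smul_eq_mul]
      field_simp
      ring
    · simp only [Fin.mk_one, PiLp.add_apply, PiLp.smul_apply, smul_eq_mul]
      field_simp
      linarith

/-- The barycentric coordinate of `x` at the corner `a` of the triangle `a b c`. -/
noncomputable def bary (a b c x : Plane) : ℝ := orient b c x / orient a b c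

lemma bary_combo (a b c u v : Plane) {s t : ℝ} (h : s + t = 1) :
    bary a b c (s • u + t • v) = s * bary a b c u + t * bary a b c v := by
  simp only [bary, orient_combo _ _ _ _ h]
  ring

@[simp] lemma bary_second (a b c : Plane) : bary a b c b = 0 := by simp [bary]

@[simp] lemma bary_third (a b c : Plane) : bary a b c c = 0 := by simp [bary]

lemma bary_first {a b c : Plane} (h : orient a b c ≠ 0) : bary a b c a = 1 := by
  rw [bary, orient_rotate, div_self h]

lemma bary_sum {a b c : Plane} (h : orient a b c ≠ 0) (x : Plane) :
    bary a b c x + bary b c a x + bary c a b x = 1 := by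
  have h1 : orient b c a = orient a b c := orient_rotate a b c
  have h2 : orient c a b = orient a b c := by rw [orient_rotate, orient_rotate]
  rw [bary, bary, bary, h1, h2]
  rw [← add_div, ← add_div, div_eq_one_iff_eq h]
  simp only [orient]; ring

lemma bary_repr {a b c : Plane} (h : orient a b c ≠ 0) (x : Plane) :
    x = bary a b c x • a + bary b c a x • b + bary c a b x • c := by
  have h1 : orient b c a = orient a b c := orient_rotate a b c
  have h2 : orient c a b = orient a b c := by rw [orient_rotate, orient_rotate]
  rw [bary, bary, bary, h1, h2]
  ext i
  simp only [PiLp.add_apply, PiLp.smul_apply, smul_eq_mul]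
  have key : x i * orient a b c = orient b c x * a i + orient c a x * b i + orient a b x * c i := by
    fin_cases i <;> simp only [orient, Fin.zero_eta, Fin.mk_one] <;> ring
  field_simp
  linarith

/-- The open triangle with corners `a`, `b`, `c`. -/
def openTri (a b c : Plane) : Set Plane :=
  {x | 0 < bary a b c x ∧ 0 < bary b c a x ∧ 0 < bary c a b x}

/-- The closed triangle with corners `a`, `b`, `c`. -/
def closedTri (a b c : Plane) : Set Plane :=
  {x | 0 ≤ bary a b c x ∧ 0 ≤ bary b c a x ∧ 0 ≤ bary c a b x}

lemma convex_openTri (a b c : Plane) : Convex ℝ (openTri a b c) := by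
  rw [convex_iff_forall_pos]
  rintro x ⟨h1, h2, h3⟩ y ⟨h4, h5, h6⟩ s t hs ht hst
  refine ⟨?_, ?_, ?_⟩ <;> rw [bary_combo _ _ _ _ _ hst] <;> positivity

lemma convex_closedTri (a b c : Plane) : Convex ℝ (closedTri a b c) := by
  rw [convex_iff_forall_pos]
  rintro x ⟨h1, h2, h3⟩ y ⟨h4, h5, h6⟩ s t hs ht hst
  refine ⟨?_, ?_, ?_⟩ <;> rw [bary_combo _ _ _ _ _ hst] <;> positivity

lemma openTri_subset_closedTri (a b c : Plane) : openTri a b c ⊆ closedTri a b c :=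
  fun _ hx => ⟨hx.1.le, hx.2.1.le, hx.2.2.le⟩

lemma corner_mem_closedTri {a b c : Plane} (h : orient a b c ≠ 0) : a ∈ closedTri a b c := by
  refine ⟨?_, ?_, ?_⟩
  · rw [bary_first h]; exact zero_le_one
  · simp
  · simp

lemma mem_closedTri_rotate {a b c x : Plane} : x ∈ closedTri b c a ↔ x ∈ closedTri a b c := by
  simp only [closedTri, Set.mem_ofPred_eq]; tauto

lemma openTri_of_openSegment {a b c v x y : Plane} (hv : v ∈ openTri a b c)
    (hx : x ∈ closedTri a b c) (hy : y ∈ openSegment ℝ v x) : y ∈ openTri a b c := by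
  obtain ⟨s, t, hs, ht, hst, rfl⟩ := hy
  obtain ⟨h1, h2, h3⟩ := hv
  obtain ⟨h4, h5, h6⟩ := hx
  refine ⟨?_, ?_, ?_⟩ <;> rw [bary_combo _ _ _ _ _ hst] <;> positivity

lemma convexHull_eq_closedTri {a b c : Plane} (h : orient a b c ≠ 0) :
    convexHull ℝ {a, b, c} = closedTri a b c := by
  have h1 : orient b c a ≠ 0 := by rwa [orient_rotate]
  have h2 : orient c a b ≠ 0 := by rwa [orient_rotate]
  apply Set.Subset.antisymm
  · apply convexHull_min _ (convex_closedTri a b c)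
    rintro x (rfl | rfl | rfl)
    · exact corner_mem_closedTri h
    · exact mem_closedTri_rotate.mp (corner_mem_closedTri h1)
    · exact mem_closedTri_rotate.mp (mem_closedTri_rotate.mp (corner_mem_closedTri h2))
  · rintro x ⟨hx1, hx2, hx3⟩
    rw [convexHull_insert (by simp), convexHull_pair]
    rw [bary_repr h x]
    have hs := bary_sum h x
    set α := bary a b c x
    set β := bary b c a x
    set γ := bary c a b x
    rw [mem_convexJoin]
    refine ⟨a, rfl, ?_⟩
    by_cases h0 : β + γ = 0
    · have hβ : β = 0 := by linarith
      have hγ : γ = 0 := by linarith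
      have hα : α = 1 := by linarith
      refine ⟨b, left_mem_segment ℝ b c, ?_⟩
      rw [hα, hβ, hγ]
      simpa using left_mem_segment ℝ a b
    · have hpos : 0 < β + γ := lt_of_le_of_ne (by linarith) (Ne.symm h0)
      refine ⟨(β / (β + γ)) • b + (γ / (β + γ)) • c,
        ⟨_, _, by positivity, by positivity, by field_simp, rfl⟩,
        α, β + γ, hx1, hpos.le, by linarith, ?_⟩
      rw [smul_add, smul_smul, smul_smul, mul_div_cancel₀ _ h0, mul_div_cancel₀ _ h0, add_assoc]

lemma mem_segment_of_bary_eq_zero {a b c x : Plane} (h : orient a b c ≠ 0)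
    (hx : x ∈ closedTri a b c) (h0 : bary a b c x = 0) : x ∈ segment ℝ b c := by
  refine ⟨bary b c a x, bary c a b x, hx.2.1, hx.2.2, ?_, ?_⟩
  · have := bary_sum h x; linarith
  · have := bary_repr h x
    rw [h0, zero_smul, zero_add] at this
    exact this.symm

/-- Moving from a point where finitely many affine quantities are positive to a point where
one of them is negative, there is a first moment at which one of them vanishes. -/
lemma exists_first_zero {ι : Type*} [Finite ι] (f g : ι → ℝ) (hf : ∀ i, 0 < f i)
    (hg : ∃ i, g i < 0) :
    ∃ t : ℝ, 0 < t ∧ t < 1 ∧ (∀ j, 0 ≤ (1 - t) * f j + t * g j) ∧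
      ∃ i, g i < 0 ∧ (1 - t) * f i + t * g i = 0 := by
  classical
  have := Fintype.ofFinite ι
  obtain ⟨i, hi, hmin⟩ := Finset.exists_min_image (Finset.univ.filter fun i => g i < 0)
    (fun i => f i / (f i - g i)) (by obtain ⟨i, hi⟩ := hg; exact ⟨i, by simpa using hi⟩)
  have hgi : g i < 0 := by simpa using hi
  have hfi := hf i
  have hd : 0 < f i - g i := by linarith
  set t := f i / (f i - g i) with ht
  have ht0 : 0 < t := by positivity
  have ht1 : t < 1 := by rw [ht, div_lt_one hd]; linarith
  refine ⟨t, ht0, ht1, fun j => ?_, i, hgi, ?_⟩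
  · have hfj := hf j
    by_cases hj : g j < 0
    · have hdj : 0 < f j - g j := by linarith
      have := hmin j (by simpa using hj)
      rw [le_div_iff₀ hdj] at this
      linarith
    · push Not at hj
      have : 0 < (1 - t) * f j := mul_pos (by linarith) hfj
      have : 0 ≤ t * g j := by positivity
      linarith
  · rw [ht]; field_simp; ring

lemma exists_exit_closedTri {a b c v x : Plane} (hv : v ∈ openTri a b c)
    (hx : x ∉ closedTri a b c) :
    ∃ m ∈ openSegment ℝ v x, m ∈ closedTri a b c ∧
      (bary a b c m = 0 ∨ bary b c a m = 0 ∨ bary c a b m = 0) := by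
  obtain ⟨t, ht0, ht1, hpos, i, -, hi⟩ := exists_first_zero
    ![bary a b c v, bary b c a v, bary c a b v] ![bary a b c x, bary b c a x, bary c a b x]
    (by intro i; fin_cases i; exacts [hv.1, hv.2.1, hv.2.2])
    (by
      by_contra! h
      exact hx ⟨h 0, h 1, h 2⟩)
  have hs : (1 - t) + t = 1 := by ring
  refine ⟨(1 - t) • v + t • x, ⟨1 - t, t, by linarith, ht0, hs, rfl⟩, ⟨?_, ?_, ?_⟩, ?_⟩
  · rw [bary_combo _ _ _ _ _ hs]; exact hpos 0
  · rw [bary_combo _ _ _ _ _ hs]; exact hpos 1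
  · rw [bary_combo _ _ _ _ _ hs]; exact hpos 2
  · simp only [bary_combo _ _ _ _ _ hs]
    fin_cases i
    exacts [Or.inl hi, Or.inr (Or.inl hi), Or.inr (Or.inr hi)]

lemma openSegment_subset_of_mem_segment {x y z : Plane} (hz : z ∈ segment ℝ x y) (hne : z ≠ y) :
    openSegment ℝ z y ⊆ openSegment ℝ x y := by
  obtain ⟨a, b, ha, hb, hab, rfl⟩ := hz
  rintro _ ⟨s, t, hs, ht, hst, rfl⟩
  have ha' : 0 < a := by
    refine lt_of_le_of_ne ha fun h => hne ?_
    obtain rfl : b = 1 := by linarith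
    simp [← h]
  refine ⟨s * a, s * b + t, by positivity, by positivity, ?_, ?_⟩
  · linear_combination s * hab + hst
  · module

/-! ### Plane drawings -/

/-- A straight-line drawing in which vertices and open edges are pairwise disjoint. -/
structure IsPlaneDrawing {V : Type*} (G : SimpleGraph V) (p : V → Plane) : Prop where
  injective : Function.Injective p
  notMem : ∀ {u v : V}, G.Adj u v → ∀ w, p w ∉ openSegment ℝ (p u) (p v)
  edge_eq : ∀ {u v x y : V}, G.Adj u v → G.Adj x y → ∀ z, z ∈ openSegment ℝ (p u) (p v) →
    z ∈ openSegment ℝ (p x) (p y) → s(u, v) = s(x, y)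

lemma isPlanarEmbedding_iff {n : ℕ} {G : SimpleGraph (Fin n)} {p : Fin n → Plane} :
    IsPlanarEmbedding G p ↔ IsPlaneDrawing G p := by
  constructor
  · rintro ⟨h1, h2, h3⟩
    have key : ∀ {u v : Fin n}, G.Adj u v → ∀ w, p w ∉ openSegment ℝ (p u) (p v) := by
      intro u v huv w hw
      rcases h2 u v w huv (openSegment_subset_segment _ _ _ hw) with rfl | rfl
      · exact huv.ne (h1 (left_mem_openSegment_iff.mp hw))
      · exact huv.ne (h1 (right_mem_openSegment_iff.mp hw))
    refine ⟨h1, key, fun {u v x y} huv hxy z hz hz' => ?_⟩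
    by_contra hne
    have hset : ({u, v} : Set (Fin n)) ≠ {x, y} := by
      intro h
      rw [Set.pair_eq_pair_iff] at h
      exact hne (Sym2.eq_iff.mpr h)
    obtain ⟨w, -, rfl⟩ := h3 u v x y huv hxy hset
      ⟨openSegment_subset_segment _ _ _ hz, openSegment_subset_segment _ _ _ hz'⟩
    exact key huv w hz
  · rintro ⟨h1, h2, h3⟩
    have key : ∀ u v w : Fin n, G.Adj u v → p w ∈ segment ℝ (p u) (p v) → w = u ∨ w = v := by
      intro u v w huv hw
      rw [← insert_endpoints_openSegment] at hw
      rcases hw with h | h | h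
      · exact Or.inl (h1 h)
      · exact Or.inr (h1 h)
      · exact absurd h (h2 huv w)
    refine ⟨h1, key, ?_⟩
    rintro u v x y huv hxy hne z ⟨hz, hz'⟩
    have hz2 := hz
    have hz2' := hz'
    rw [← insert_endpoints_openSegment] at hz hz'
    rcases hz with rfl | rfl | hz
    · exact ⟨u, ⟨by simp, key x y u hxy hz2'⟩, rfl⟩
    · exact ⟨v, ⟨by simp, key x y v hxy hz2'⟩, rfl⟩
    · rcases hz' with rfl | rfl | hz'
      · exact absurd hz (h2 huv x)
      · exact absurd hz (h2 huv y)
      · refine absurd ?_ hne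
        rw [Set.pair_eq_pair_iff]
        exact Sym2.eq_iff.mp (h3 huv hxy z hz hz')

namespace IsPlaneDrawing

variable {V : Type*} {G : SimpleGraph V} {p : V → Plane}

lemma sup_edge (h : IsPlaneDrawing G p) {u v : V} (huv : u ≠ v)
    (hvert : ∀ w, p w ∉ openSegment ℝ (p u) (p v))
    (hedge : ∀ x y, G.Adj x y → ∀ z ∈ openSegment ℝ (p u) (p v), z ∉ openSegment ℝ (p x) (p y)) :
    IsPlaneDrawing (G ⊔ SimpleGraph.fromEdgeSet {s(u, v)}) p := by
  have hadj : ∀ {x y}, (G ⊔ SimpleGraph.fromEdgeSet {s(u, v)}).Adj x y →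
      G.Adj x y ∨ (s(x, y) = s(u, v) ∧
        openSegment ℝ (p x) (p y) = openSegment ℝ (p u) (p v)) := by
    intro x y hxy
    rcases hxy with hxy | hxy
    · exact Or.inl hxy
    · have he : s(x, y) = s(u, v) := by simpa using hxy.1
      refine Or.inr ⟨he, ?_⟩
      rcases Sym2.eq_iff.mp he with ⟨rfl, rfl⟩ | ⟨rfl, rfl⟩
      · rfl
      · exact openSegment_symm _ _ _
  refine ⟨h.injective, fun {x y} hxy w => ?_, fun {x y x' y'} hxy hxy' z hz hz' => ?_⟩
  · rcases hadj hxy with hxy | ⟨-, he⟩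
    · exact h.notMem hxy w
    · rw [he]; exact hvert w
  · rcases hadj hxy with hxy | ⟨hs, he⟩ <;> rcases hadj hxy' with hxy' | ⟨hs', he'⟩
    · exact h.edge_eq hxy hxy' z hz hz'
    · exact absurd hz (hedge x y hxy z (he' ▸ hz'))
    · exact absurd hz' (hedge x' y' hxy' z (he ▸ hz))
    · rw [hs, hs']

lemma orient_ne_zero (h : IsPlaneDrawing G p) {a b c : V} (hab : G.Adj a b) (hbc : G.Adj b c)
    (hac : G.Adj a c) : orient (p a) (p b) (p c) ≠ 0 := by
  intro h0
  obtain ⟨k, hk⟩ := exists_combo_of_orient_eq_zero (fun he => hab.ne (h.injective he)) h0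
  rcases lt_trichotomy k 0 with hk0 | rfl | hk0
  · refine h.notMem hbc a ⟨-k / (1 - k), 1 / (1 - k), ?_, ?_, ?_, ?_⟩
    · exact div_pos (by linarith) (by linarith)
    · exact div_pos one_pos (by linarith)
    · have : 1 - k ≠ 0 := by linarith
      field_simp
      ring
    · have h1 : 1 - k ≠ 0 := by linarith
      rw [hk]
      match_scalars <;> field_simp
      ring
  · exact hac.ne (h.injective (by simpa using hk.symm))
  · rcases lt_trichotomy k 1 with hk1 | rfl | hk1
    · exact h.notMem hab c ⟨1 - k, k, by linarith, hk0, by ring, hk.symm⟩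
    · exact hbc.ne (h.injective (by simpa using hk.symm))
    · refine h.notMem hac b ⟨(k - 1) / k, 1 / k, ?_, ?_, ?_, ?_⟩
      · exact div_pos (by linarith) (by linarith)
      · positivity
      · field_simp
        ring
      · rw [hk]
        match_scalars <;> field_simp
        ring

/-- A vertex in a closed triangle of the graph is a corner or lies in the open triangle. -/
lemma mem_openTri (h : IsPlaneDrawing G p) {a b c w : V} (hab : G.Adj a b) (hbc : G.Adj b c)
    (hac : G.Adj a c) (hw : p w ∈ closedTri (p a) (p b) (p c)) (ha : w ≠ a) (hb : w ≠ b)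
    (hc : w ≠ c) : p w ∈ openTri (p a) (p b) (p c) := by
  have side : ∀ {x y z : V}, G.Adj x y → G.Adj y z → G.Adj x z →
      p w ∈ closedTri (p x) (p y) (p z) → w ≠ y → w ≠ z → 0 < bary (p x) (p y) (p z) (p w) := by
    intro x y z hxy hyz hxz hw hy hz
    refine lt_of_le_of_ne hw.1 fun h0 => ?_
    have := mem_segment_of_bary_eq_zero (h.orient_ne_zero hxy hyz hxz) hw h0.symm
    rw [← insert_endpoints_openSegment] at this
    rcases this with h' | h' | h'
    · exact hy (h.injective h')
    · exact hz (h.injective h')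
    · exact h.notMem hyz w h'
  have hw' := mem_closedTri_rotate.mpr hw
  exact ⟨side hab hbc hac hw hb hc, side hbc hac.symm hab.symm hw' hc ha,
    side hac.symm hab hbc.symm (mem_closedTri_rotate.mpr hw') ha hb⟩

/-- If a boundary point of a triangle of the graph lies on an open edge,
then that edge is a side of the triangle. -/
lemma edge_eq_of_boundary (h : IsPlaneDrawing G p) {a b c x y : V} {m : Plane} (hab : G.Adj a b)
    (hbc : G.Adj b c) (hac : G.Adj a c) (hxy : G.Adj x y)
    (hm : m ∈ openSegment ℝ (p x) (p y)) (hT : m ∈ closedTri (p a) (p b) (p c))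
    (h0 : bary (p a) (p b) (p c) m = 0 ∨ bary (p b) (p c) (p a) m = 0 ∨
      bary (p c) (p a) (p b) m = 0) :
    s(x, y) = s(b, c) ∨ s(x, y) = s(c, a) ∨ s(x, y) = s(a, b) := by
  have side : ∀ {x' y' z' : V}, G.Adj x' y' → G.Adj y' z' → G.Adj x' z' →
      m ∈ closedTri (p x') (p y') (p z') → bary (p x') (p y') (p z') m = 0 →
      s(x, y) = s(y', z') := by
    intro x' y' z' h1 h2 h3 hm' h0
    have := mem_segment_of_bary_eq_zero (h.orient_ne_zero h1 h2 h3) hm' h0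
    rw [← insert_endpoints_openSegment] at this
    rcases this with rfl | rfl | h'
    · exact absurd hm (h.notMem hxy _)
    · exact absurd hm (h.notMem hxy _)
    · exact h.edge_eq hxy h2 m hm h'
  have hT' := mem_closedTri_rotate.mpr hT
  rcases h0 with h0 | h0 | h0
  · exact Or.inl (side hab hbc hac hT h0)
  · exact Or.inr (Or.inl (side hbc hac.symm hab.symm hT' h0))
  · exact Or.inr (Or.inr (side hac.symm hab hbc.symm (mem_closedTri_rotate.mpr hT') h0))

lemma corners_mem_closedTri (h : IsPlaneDrawing G p) {a b c w : V} (hab : G.Adj a b)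
    (hbc : G.Adj b c) (hac : G.Adj a c) (hw : w = a ∨ w = b ∨ w = c) :
    p w ∈ closedTri (p a) (p b) (p c) := by
  rw [← convexHull_eq_closedTri (h.orient_ne_zero hab hbc hac)]
  apply subset_convexHull
  rcases hw with rfl | rfl | rfl <;> simp

/-- An edge with a point in the open triangle ends in the closed triangle. -/
lemma mem_closedTri_of_edge (h : IsPlaneDrawing G p) {a b c x y : V} {z : Plane}
    (hab : G.Adj a b) (hbc : G.Adj b c) (hac : G.Adj a c) (hxy : G.Adj x y)
    (hz : z ∈ segment ℝ (p x) (p y)) (hT : z ∈ openTri (p a) (p b) (p c)) :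
    p y ∈ closedTri (p a) (p b) (p c) := by
  by_contra hy
  obtain ⟨m, hm, hmT, h0⟩ := exists_exit_closedTri hT hy
  have hzy : z ≠ p y := by
    rintro rfl
    exact hy (openTri_subset_closedTri _ _ _ hT)
  have hm' := openSegment_subset_of_mem_segment hz hzy hm
  apply hy
  apply h.corners_mem_closedTri hab hbc hac
  rcases h.edge_eq_of_boundary hab hbc hac hxy hm' hmT h0 with h1 | h1 | h1 <;>
    rcases Sym2.eq_iff.mp h1 with ⟨-, h2⟩ | ⟨-, h2⟩ <;> simp [h2]

/-- An edge between corners of a triangle misses the open triangle. -/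
lemma notMem_openTri_of_corners {a b c x y z : Plane} (hx : x = a ∨ x = b ∨ x = c)
    (hy : y = a ∨ y = b ∨ y = c) (hz : z ∈ segment ℝ x y) : z ∉ openTri a b c := by
  obtain ⟨s, t, -, -, hst, rfl⟩ := hz
  rintro ⟨h1, h2, h3⟩
  rw [bary_combo _ _ _ _ _ hst] at h1 h2 h3
  rcases hx with rfl | rfl | rfl <;> rcases hy with rfl | rfl | rfl <;> simp at h1 h2 h3

end IsPlaneDrawing

/-! ### Visibility -/

/-- The open segment from `o` to `q` is crossed transversally by the open edge `x y`. -/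
def Crosses {V : Type*} (p : V → Plane) (o q : Plane) (x y : V) : Prop :=
  ∃ z ∈ openSegment ℝ o q, z ∈ openSegment ℝ (p x) (p y) ∧ orient o q (p x) ≠ 0

/-- No edge of the drawing crosses the open segment from `o` to `q` transversally. -/
def Uncrossed {V : Type*} (G : SimpleGraph V) (p : V → Plane) (o q : Plane) : Prop :=
  ∀ x y, G.Adj x y → ¬ Crosses p o q x y

lemma orient_eq_zero_of_mem_segment {o q z : Plane} (hz : z ∈ segment ℝ o q) :
    orient o q z = 0 := by
  obtain ⟨s, t, -, -, hst, rfl⟩ := hz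
  simp [orient_combo _ _ _ _ hst]

section Visibility

variable {V : Type*} {G : SimpleGraph V} {p : V → Plane}

lemma Crosses.symm {o q : Plane} {x y : V} (h : Crosses p o q x y) : Crosses p o q y x := by
  obtain ⟨z, hz, hz', h0⟩ := h
  refine ⟨z, hz, by rwa [openSegment_symm], fun hy => h0 ?_⟩
  have h1 := orient_eq_zero_of_mem_segment (openSegment_subset_segment _ _ _ hz)
  obtain ⟨s, t, hs, -, hst, rfl⟩ := hz'
  rw [orient_combo _ _ _ _ hst, hy, mul_zero, add_zero] at h1
  exact (mul_eq_zero.mp h1).resolve_left hs.ne'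

lemma Crosses.mono {o q o' q' : Plane} {x y : V} (h : Crosses p o' q' x y)
    (ho : o' ∈ segment ℝ o q) (hq : q' ∈ segment ℝ o q) : Crosses p o q x y := by
  obtain ⟨z, hz, hz', h0⟩ := h
  obtain ⟨a, b, ha, hb, hab, rfl⟩ := ho
  obtain ⟨c, d, hc, hd, hcd, rfl⟩ := hq
  obtain ⟨s, t, hs, ht, hst, rfl⟩ := hz
  have key : orient (a • o + b • q) (c • o + d • q) (p x) = (d - b) * orient o q (p x) := by
    obtain rfl : a = 1 - b := by linarith
    obtain rfl : c = 1 - d := by linarith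
    simp only [orient, PiLp.add_apply, PiLp.smul_apply, smul_eq_mul]
    ring
  rw [key] at h0
  have hdb : d - b ≠ 0 := left_ne_zero_of_mul h0
  refine ⟨_, ⟨s * a + t * c, s * b + t * d, ?_, ?_, ?_, ?_⟩, hz', right_ne_zero_of_mul h0⟩
  · by_contra! hle
    have h1 : s * a = 0 := by nlinarith [mul_nonneg hs.le ha, mul_nonneg ht.le hc]
    have h2 : t * c = 0 := by nlinarith [mul_nonneg hs.le ha, mul_nonneg ht.le hc]
    have h3 := (mul_eq_zero.mp h1).resolve_left hs.ne'
    have h4 := (mul_eq_zero.mp h2).resolve_left ht.ne'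
    apply hdb; linarith
  · by_contra! hle
    have h1 : s * b = 0 := by nlinarith [mul_nonneg hs.le hb, mul_nonneg ht.le hd]
    have h2 : t * d = 0 := by nlinarith [mul_nonneg hs.le hb, mul_nonneg ht.le hd]
    have h3 := (mul_eq_zero.mp h1).resolve_left hs.ne'
    have h4 := (mul_eq_zero.mp h2).resolve_left ht.ne'
    apply hdb; linarith
  · linear_combination s * hab + t * hcd + hst
  · module

lemma Uncrossed.mono {o q o' q' : Plane} (h : Uncrossed G p o q)
    (ho : o' ∈ segment ℝ o q) (hq : q' ∈ segment ℝ o q) : Uncrossed G p o' q' :=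
  fun x y hxy hc => h x y hxy (hc.mono ho hq)

/-- If no vertex of the triangle `o q r`, where `q` lies on an edge at `r`, lies at a smaller
angle than the ray from `o` through `z = (1 - θ) q + θ r`, then `o z` is uncrossed. -/
lemma IsPlaneDrawing.uncrossed_of_angle_le (h : IsPlaneDrawing G p) {r r' : V} (hr : G.Adj r r')
    {o q : Plane} (hq : q ∈ openSegment ℝ (p r) (p r')) (hD : orient o q (p r) ≠ 0)
    (hoq : Uncrossed G p o q) {θ : ℝ} (hθ : 0 < θ) (hθ1 : θ ≤ 1)
    (hS : ∀ x, p x ∈ closedTri o q (p r) → p x ≠ o →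
      θ * (bary q (p r) o (p x) + bary (p r) o q (p x)) ≤ bary (p r) o q (p x)) :
    Uncrossed G p o ((1 - θ) • q + θ • p r) := by
  have hD1 : orient q (p r) o ≠ 0 := by rwa [orient_rotate]
  have hD2 : orient (p r) o q ≠ 0 := by rwa [orient_rotate]
  set R := p r with hR
  set f : Plane → ℝ := fun x => θ * bary q R o x - (1 - θ) * bary R o q x with hf
  have hf_combo : ∀ (u v : Plane) {s t : ℝ}, s + t = 1 →
      f (s • u + t • v) = s * f u + t * f v := by
    intro u v s t hst
    simp only [hf, bary_combo _ _ _ _ _ hst]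
    ring
  have hf_orient : ∀ x, f x = -orient o ((1 - θ) • q + θ • R) x / orient o q R := by
    intro x
    have e1 : orient q R o = orient o q R := by rw [orient_rotate]
    have e2 : orient R o q = orient o q R := by rw [orient_rotate, orient_rotate]
    simp only [hf, bary, e1, e2]
    field_simp
    simp only [orient, PiLp.add_apply, PiLp.smul_apply, smul_eq_mul]
    ring
  intro x y hxy hc
  have main : ∀ {x y : V}, G.Adj x y → Crosses p o ((1 - θ) • q + θ • R) x y →
      0 < f (p x) → False := by
    rintro x y hxy ⟨m, hm, hm', h0⟩ hfx
    have hfm : f m = 0 := by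
      rw [hf_orient, orient_eq_zero_of_mem_segment (openSegment_subset_segment _ _ _ hm)]
      simp
    have hm_pos : 0 < bary o q R m ∧ 0 < bary R o q m := by
      obtain ⟨s, t, hs, ht, hst, rfl⟩ := hm
      have e : (1 - θ) + θ = 1 := by ring
      simp only [bary_combo _ _ _ _ _ hst, bary_combo _ _ _ _ _ e, bary_first hD, bary_first hD2,
        bary_second, bary_third]
      constructor <;> simp <;> positivity
    have hout : bary o q R (p x) < 0 ∨ bary R o q (p x) < 0 := by
      by_contra! hcon
      obtain ⟨h1, h2⟩ := hcon
      have h3 : 0 ≤ bary q R o (p x) := by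
        have : 0 ≤ θ * bary q R o (p x) := by
          have := mul_nonneg (sub_nonneg.mpr hθ1) h2
          simp only [hf] at hfx
          linarith
        exact nonneg_of_mul_nonneg_right this hθ
      have hxo : p x ≠ o := by
        intro hxo
        rw [hxo] at hfx
        simp [hf] at hfx
      have := hS x ⟨h1, h3, h2⟩ hxo
      simp only [hf] at hfx
      linarith
    obtain ⟨t, ht0, ht1, hpos, i, hi, hi0⟩ := exists_first_zero
      ![bary o q R m, bary R o q m] ![bary o q R (p x), bary R o q (p x)]
      (by intro i; fin_cases i; exacts [hm_pos.1, hm_pos.2])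
      (by rcases hout with h | h; exacts [⟨0, h⟩, ⟨1, h⟩])
    have e : (1 - t) + t = 1 := by ring
    set k := (1 - t) • m + t • p x with hk
    have hko : 0 ≤ bary o q R k := by rw [hk, bary_combo _ _ _ _ _ e]; exact hpos 0
    have hkr : 0 ≤ bary R o q k := by rw [hk, bary_combo _ _ _ _ _ e]; exact hpos 1
    have hfk : 0 < f k := by rw [hk, hf_combo _ _ e, hfm]; simp; positivity
    have hkq : 0 < bary q R o k := by
      have h1 : 0 < θ * bary q R o k := by
        have := mul_nonneg (sub_nonneg.mpr hθ1) hkr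
        simp only [hf] at hfk
        linarith
      exact pos_of_mul_pos_right h1 hθ.le
    have hkxy : k ∈ openSegment ℝ (p x) (p y) := by
      obtain ⟨s, s', hs, hs', hss, hsm⟩ := hm'
      refine ⟨(1 - t) * s + t, (1 - t) * s', ?_, ?_, ?_, ?_⟩
      · have := mul_pos (sub_pos.mpr ht1) hs; linarith
      · exact mul_pos (sub_pos.mpr ht1) hs'
      · linear_combination (1 - t) * hss
      · rw [hk, ← hsm]; module
    have hsum := bary_sum hD k
    have hrep := bary_repr hD k
    have hedge : bary o q R k = 0 → False := by
      intro hk0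
      have hkrr : k ∈ openSegment ℝ R (p r') := by
        obtain ⟨s, s', hs, hs', hss, hsm⟩ := hq
        rw [hk0, zero_smul, zero_add] at hrep
        refine ⟨bary q R o k * s + bary R o q k, bary q R o k * s', by positivity, by positivity,
          ?_, ?_⟩
        · linear_combination bary q R o k * hss + hsum - hk0
        · conv_rhs => rw [hrep]
          rw [← hsm]; module
      have hline : ∀ w, w = r ∨ w = r' → bary o q R (p w) = 0 := by
        rintro w (rfl | rfl)
        · simp [hR]
        · obtain ⟨s, s', hs, hs', hss, hsm⟩ := hq
          have : bary o q R q = 0 := bary_second _ _ _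
          nth_rewrite 2 [← hsm] at this
          rw [bary_combo _ _ _ _ _ hss, bary_third, mul_zero, zero_add] at this
          exact (mul_eq_zero.mp this).resolve_left hs'.ne'
      have hs := Sym2.eq_iff.mp (h.edge_eq hxy hr k hkxy hkrr)
      have hx0 := hline x (by tauto)
      have hy0 := hline y (by tauto)
      obtain ⟨s, s', -, -, hss, rfl⟩ := hm'
      rw [bary_combo _ _ _ _ _ hss, hx0, hy0] at hm_pos
      simp at hm_pos
    fin_cases i
    · exact hedge (by rw [hk, bary_combo _ _ _ _ _ e]; exact hi0)
    · have hk0 : bary R o q k = 0 := by rw [hk, bary_combo _ _ _ _ _ e]; exact hi0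
      have hko' : 0 < bary o q R k := lt_of_le_of_ne hko fun h => hedge h.symm
      refine hoq x y hxy ⟨k, ⟨bary o q R k, bary q R o k, hko', hkq, by linarith, ?_⟩, hkxy, ?_⟩
      · rw [hk0, zero_smul, add_zero] at hrep
        exact hrep.symm
      · intro h0
        have : bary R o q (p x) < 0 := hi
        rw [bary, h0, zero_div] at this
        exact lt_irrefl _ this
  rcases lt_trichotomy (f (p x)) 0 with hx | hx | hx
  · refine main hxy.symm hc.symm ?_
    obtain ⟨m, hm, hm', h0⟩ := hc
    have hfm : f m = 0 := by
      rw [hf_orient, orient_eq_zero_of_mem_segment (openSegment_subset_segment _ _ _ hm)]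
      simp
    obtain ⟨s, t, hs, ht, hst, rfl⟩ := hm'
    rw [hf_combo _ _ hst] at hfm
    have : 0 < t * f (p y) := by nlinarith
    exact pos_of_mul_pos_right this ht.le
  · obtain ⟨m, hm, hm', h0⟩ := hc
    rw [hf_orient, div_eq_zero_iff, neg_eq_zero] at hx
    exact hx.elim h0 hD
  · exact main hxy hc hx

/-- The point `q` lies on an edge at the vertex `r`, possibly at `r` itself, but not at
the other end of the edge. -/
def OnEdgeAt (G : SimpleGraph V) (p : V → Plane) (q : Plane) (r : V) : Prop :=
  q = p r ∨ ∃ r', G.Adj r r' ∧ q ∈ openSegment ℝ (p r) (p r')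

lemma OnEdgeAt.combo {q : Plane} {r : V} (h : OnEdgeAt G p q r) {θ : ℝ} (h0 : 0 ≤ θ)
    (h1 : θ ≤ 1) : OnEdgeAt G p ((1 - θ) • q + θ • p r) r := by
  rcases h with rfl | ⟨r', hr, s, t, hs, ht, hst, rfl⟩
  · left; module
  · rcases h1.eq_or_lt with rfl | h1
    · left; module
    · refine Or.inr ⟨r', hr, (1 - θ) * s + θ, (1 - θ) * t, ?_, ?_, ?_, by module⟩
      · have := mul_pos (sub_pos.mpr h1) hs; linarith
      · exact mul_pos (sub_pos.mpr h1) ht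
      · linear_combination (1 - θ) * hst

lemma IsPlaneDrawing.uncrossed_of_collinear (h : IsPlaneDrawing G p) {r : V} {o q : Plane}
    (hq : OnEdgeAt G p q r) (h0 : orient o q (p r) = 0) (hoq : Uncrossed G p o q) :
    Uncrossed G p o (p r) := by
  rcases hq with rfl | ⟨r', hr, hq⟩
  · exact hoq
  rintro x y hxy ⟨z, hz, hz', hx⟩
  have hor : o ≠ p r := by
    intro e
    simp [e] at hx
  have hq0 : orient o (p r) q = 0 := by
    have : orient o (p r) q = -orient o q (p r) := by simp only [orient]; ring
    rw [this, h0, neg_zero]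
  obtain ⟨k, hk⟩ := exists_combo_of_orient_eq_zero hor hq0
  have hedge : z ∈ openSegment ℝ (p r) (p r') → False := by
    intro hzr
    apply hx
    rcases Sym2.eq_iff.mp (h.edge_eq hxy hr z hz' hzr) with ⟨rfl, -⟩ | ⟨rfl, -⟩
    · simp
    · obtain ⟨s, t, hs, ht, hst, rfl⟩ := hq
      rw [orient_combo _ _ _ _ hst, orient_self_right, mul_zero, zero_add] at hq0
      exact (mul_eq_zero.mp hq0).resolve_left ht.ne'
  have hrange : q ∈ Set.range (AffineMap.lineMap o (p r) : ℝ → Plane) :=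
    ⟨k, by rw [AffineMap.lineMap_apply_module, hk]⟩
  rcases openSegment_subset_union o (p r) hrange hz with rfl | hz1 | hz1
  · exact hedge hq
  · by_cases hk0 : k = 0
    · have : q = o := by rw [hk, hk0]; module
      rw [this, openSegment_same] at hz1
      obtain rfl : z = o := hz1
      exact hedge (this ▸ hq)
    · refine hoq x y hxy ⟨z, hz1, hz', ?_⟩
      have : orient o q (p x) = k * orient o (p r) (p x) := by
        rw [hk]
        simp only [orient, PiLp.add_apply, PiLp.smul_apply, smul_eq_mul]
        ring
      rw [this]
      exact mul_ne_zero hk0 hx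
  · apply hedge
    obtain ⟨s, t, hs, ht, hst, rfl⟩ := hq
    obtain ⟨s', t', hs', ht', hst', rfl⟩ := hz1
    refine ⟨s' * s + t', s' * t, by positivity, by positivity, ?_, by module⟩
    linear_combination s' * hst + hst'

lemma Crosses.exists_mem {o q : Plane} {x y : V} (h : Crosses p o q x y) :
    ∃ z ∈ openSegment ℝ o q, z ∈ openSegment ℝ (p x) (p y) ∧
      ¬ Crosses p o z x y ∧ ¬ Crosses p z q x y := by
  obtain ⟨z, hz, hz', h0⟩ := h
  have hz1 := orient_eq_zero_of_mem_segment (openSegment_subset_segment _ _ _ hz)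
  have hz2 : orient (p x) (p y) z = 0 :=
    orient_eq_zero_of_mem_segment (openSegment_subset_segment _ _ _ hz')
  -- the crossing point is unique
  have uniq : ∀ z' ∈ segment ℝ o q, z' ∈ openSegment ℝ (p x) (p y) → z' = z := by
    intro z' hs hs'
    have hz3 := orient_eq_zero_of_mem_segment hs
    obtain ⟨s, t, hs, ht, hst, rfl⟩ := hz'
    obtain ⟨s', t', hs', ht', hst', rfl⟩ := hs'
    rw [orient_combo _ _ _ _ hst] at hz1
    rw [orient_combo _ _ _ _ hst'] at hz3
    have : (s - s') * (orient o q (p x) - orient o q (p y)) = 0 := by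
      obtain rfl : t = 1 - s := by linarith
      obtain rfl : t' = 1 - s' := by linarith
      linear_combination hz1 - hz3
    rcases mul_eq_zero.mp this with e | e
    · obtain rfl : s = s' := by linarith
      obtain rfl : t = t' := by linarith
      rfl
    · exfalso
      apply h0
      have : orient o q (p y) = orient o q (p x) := by linarith
      rw [this, ← add_mul, hst, one_mul] at hz1
      exact hz1
  have hzs := openSegment_subset_segment _ _ _ hz
  refine ⟨z, hz, hz', ?_, ?_⟩
  · rintro ⟨z', h1, h2, h3⟩
    obtain rfl := uniq z' ((convex_segment o q).segment_subset (left_mem_segment ℝ o q) hzs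
      (openSegment_subset_segment _ _ _ h1)) h2
    have := right_mem_openSegment_iff.mp h1
    rw [this] at h3
    simp at h3
  · rintro ⟨z', h1, h2, h3⟩
    obtain rfl := uniq z' ((convex_segment o q).segment_subset hzs (right_mem_segment ℝ o q)
      (openSegment_subset_segment _ _ _ h1)) h2
    have := left_mem_openSegment_iff.mp h1
    rw [this] at h3
    simp at h3

section Labels

variable [Finite V] {C : Set Plane} {A : V → Prop}

/-- Suppose vertices of `C` that see each other have equal labels. If `o` sees a point of an edge
at `r`, then `o` sees a vertex with the label of `r`. -/
lemma IsPlaneDrawing.exists_uncrossed_of_onEdgeAt (h : IsPlaneDrawing G p) (hC : Convex ℝ C)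
    (hvis : ∀ u v, p u ∈ C → p v ∈ C → Uncrossed G p (p u) (p v) → (A u ↔ A v))
    {r : V} (hr : p r ∈ C) {o q : Plane} (ho : o ∈ C) (hq : q ∈ C) (hoq : Uncrossed G p o q)
    (hqr : OnEdgeAt G p q r) :
    ∃ s, p s ∈ C ∧ (A s ↔ A r) ∧ Uncrossed G p o (p s) := by
  induction hk : Set.ncard {w | p w ≠ o ∧ p w ∈ convexHull ℝ {o, q, p r}} using
    Nat.strong_induction_on generalizing o q with
  | _ k ih =>
  by_cases hD : orient o q (p r) = 0
  · exact ⟨r, hr, Iff.rfl, h.uncrossed_of_collinear hqr hD hoq⟩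
  have hsub : convexHull ℝ {o, q, p r} ⊆ C := by
    apply convexHull_min _ hC
    rintro x (rfl | rfl | rfl) <;> assumption
  have hhull := convexHull_eq_closedTri hD
  have hpos : ∀ w, p w ≠ o → p w ∈ closedTri o q (p r) →
      0 < bary q (p r) o (p w) + bary (p r) o q (p w) := by
    intro w hw hwT
    obtain ⟨h1, h2, h3⟩ := hwT
    refine lt_of_le_of_ne (by linarith) fun h0 => hw ?_
    have hs := bary_sum hD (p w)
    have e1 : bary q (p r) o (p w) = 0 := by linarith
    have e2 : bary (p r) o q (p w) = 0 := by linarith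
    have e3 : bary o q (p r) (p w) = 1 := by linarith
    rw [bary_repr hD (p w), e1, e2, e3]
    module
  have hrS : r ∈ {w | p w ≠ o ∧ p w ∈ convexHull ℝ {o, q, p r}} := by
    refine ⟨fun e => ?_, subset_convexHull _ _ (by simp)⟩
    simp [e] at hD
  obtain ⟨w, ⟨hwo, hwT⟩, hmin⟩ := Set.exists_min_image
    {w | p w ≠ o ∧ p w ∈ convexHull ℝ {o, q, p r}}
    (fun w => bary (p r) o q (p w) / (bary q (p r) o (p w) + bary (p r) o q (p w)))
    (Set.toFinite _) ⟨r, hrS⟩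
  have hwT' := hwT
  rw [hhull] at hwT'
  have hwpos := hpos w hwo hwT'
  obtain ⟨h1, h2, h3⟩ := hwT'
  set θ := bary (p r) o q (p w) / (bary q (p r) o (p w) + bary (p r) o q (p w)) with hθ
  have hθ0 : 0 ≤ θ := div_nonneg h3 hwpos.le
  have hθ1 : θ ≤ 1 := by rw [hθ, div_le_one hwpos]; linarith
  set z := (1 - θ) • q + θ • p r with hz
  have hoz : Uncrossed G p o z := by
    rcases hθ0.eq_or_lt with h0 | h0
    · have : z = q := by rw [hz, ← h0]; module
      rwa [this]
    rcases hqr with rfl | ⟨r', hrr, hqr⟩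
    · simp at hD
    refine h.uncrossed_of_angle_le hrr hqr hD hoq h0 hθ1 fun x hx hxo => ?_
    have := hmin x ⟨hxo, hhull ▸ hx⟩
    rwa [le_div_iff₀ (hpos x hxo hx)] at this
  have hwz : p w ∈ segment ℝ o z := by
    refine ⟨bary o q (p r) (p w), bary q (p r) o (p w) + bary (p r) o q (p w), h1, hwpos.le, ?_, ?_⟩
    · have := bary_sum hD (p w); linarith
    · have e1 : (bary q (p r) o (p w) + bary (p r) o q (p w)) * θ = bary (p r) o q (p w) := by
        rw [hθ]; field_simp
      have e2 : (bary q (p r) o (p w) + bary (p r) o q (p w)) * (1 - θ) = bary q (p r) o (p w) := by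
        linear_combination -e1
      rw [hz, smul_add, smul_smul, smul_smul, e1, e2, ← add_assoc]
      exact (bary_repr hD (p w)).symm
  have how : Uncrossed G p o (p w) := hoz.mono (left_mem_segment ℝ o z) hwz
  by_cases hlab : A w ↔ A r
  · exact ⟨w, hsub hwT, hlab, how⟩
  have hzhull : z ∈ convexHull ℝ {o, q, p r} :=
    convex_convexHull ℝ _ (subset_convexHull _ _ (by simp)) (subset_convexHull _ _ (by simp))
      (sub_nonneg.mpr hθ1) hθ0 (by ring)
  have hssub : {x | p x ≠ p w ∧ p x ∈ convexHull ℝ {p w, z, p r}} ⊂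
      {x | p x ≠ o ∧ p x ∈ convexHull ℝ {o, q, p r}} := by
    have hle : convexHull ℝ {p w, z, p r} ⊆ convexHull ℝ {o, q, p r} := by
      apply convexHull_min _ (convex_convexHull ℝ _)
      rintro x (rfl | rfl | rfl)
      exacts [hwT, hzhull, subset_convexHull _ _ (by simp)]
    refine (Set.ssubset_iff_of_subset ?_).mpr ⟨w, ⟨hwo, hwT⟩, fun hw => hw.1 rfl⟩
    rintro x ⟨hx, hx'⟩
    refine ⟨?_, hle hx'⟩
    rintro hxo
    have hlt : convexHull ℝ {p w, z, p r} ⊆ {x | bary o q (p r) x < 1} := by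
      apply convexHull_min
      · rintro x (rfl | rfl | rfl)
        · have := bary_sum hD (p w)
          simp only [Set.mem_ofPred_eq]
          linarith
        · have e : (1 - θ) + θ = 1 := by ring
          simp [hz, bary_combo _ _ _ _ _ e]
        · simp
      · rw [convex_iff_forall_pos]
        intro x hx y hy s t hs ht hst
        simp only [Set.mem_ofPred_eq, bary_combo _ _ _ _ _ hst] at *
        nlinarith
    have := hlt hx'
    rw [hxo] at this
    simp only [Set.mem_ofPred_eq, bary_first hD] at this
    exact lt_irrefl _ this
  obtain ⟨s, hsC, hsr, hws⟩ := ih _ (hk ▸ Set.ncard_lt_ncard hssub (Set.toFinite _))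
    (hsub hwT) (hsub hzhull) (hoz.mono hwz (right_mem_segment ℝ o z)) (hqr.combo hθ0 hθ1) rfl
  exact absurd ((hvis w s (hsub hwT) hsC hws).trans hsr) hlab

/-- If vertices of `C` that see each other have equal labels, then every point of `C` sees
vertices of all labels that occur in `C`. -/
lemma IsPlaneDrawing.exists_uncrossed (h : IsPlaneDrawing G p) (hC : Convex ℝ C)
    (hend : ∀ x y, G.Adj x y → ∀ z ∈ segment ℝ (p x) (p y), z ∈ C → p x ∈ C ∨ p y ∈ C)
    (hvis : ∀ u v, p u ∈ C → p v ∈ C → Uncrossed G p (p u) (p v) → (A u ↔ A v))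
    {r : V} (hr : p r ∈ C) {o q : Plane} (ho : o ∈ C) (hq : q ∈ C) (hqr : OnEdgeAt G p q r) :
    ∃ s, p s ∈ C ∧ (A s ↔ A r) ∧ Uncrossed G p o (p s) := by
  induction hk : Set.ncard {e : V × V | G.Adj e.1 e.2 ∧ Crosses p o q e.1 e.2} using
    Nat.strong_induction_on generalizing o q r with
  | _ k ih =>
  by_cases hun : Uncrossed G p o q
  · exact h.exists_uncrossed_of_onEdgeAt hC hvis hr ho hq hun hqr
  simp only [Uncrossed, not_forall, not_not] at hun
  obtain ⟨x, y, hxy, hc⟩ := hun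
  have main : ∀ {x y : V}, G.Adj x y → Crosses p o q x y → p x ∈ C →
      ∃ s, p s ∈ C ∧ (A s ↔ A r) ∧ Uncrossed G p o (p s) := by
    intro x y hxy hc hx
    obtain ⟨z, hz, hz', hoz, hzq⟩ := hc.exists_mem
    have hzs := openSegment_subset_segment _ _ _ hz
    have hzC : z ∈ C := hC.segment_subset ho hq hzs
    have hzx : OnEdgeAt G p z x := Or.inr ⟨y, hxy, hz'⟩
    have hlt : ∀ {o' q' : Plane}, o' ∈ segment ℝ o q → q' ∈ segment ℝ o q →
        ¬ Crosses p o' q' x y →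
        Set.ncard {e : V × V | G.Adj e.1 e.2 ∧ Crosses p o' q' e.1 e.2} < k := by
      intro o' q' ho' hq' hn
      have hss : {e : V × V | G.Adj e.1 e.2 ∧ Crosses p o' q' e.1 e.2} ⊂
          {e : V × V | G.Adj e.1 e.2 ∧ Crosses p o q e.1 e.2} := by
        refine (Set.ssubset_iff_of_subset ?_).mpr ⟨(x, y), ⟨hxy, hc⟩, fun hne => hn hne.2⟩
        rintro e ⟨h1, h2⟩
        exact ⟨h1, h2.mono ho' hq'⟩
      exact hk ▸ Set.ncard_lt_ncard hss (Set.toFinite _)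
    obtain ⟨s, hs, hsx, hos⟩ := ih _ (hlt (left_mem_segment ℝ o q) hzs hoz) hx ho hzC hzx rfl
    obtain ⟨s', hs', hsr', hzs'⟩ := ih _ (hlt hzs (right_mem_segment ℝ o q) hzq) hr hzC hq hqr rfl
    obtain ⟨s'', hs'', hsx'', hss⟩ := h.exists_uncrossed_of_onEdgeAt hC hvis hx hs' hzC
      (fun x y hxy hcr => hzs' x y hxy (by
        obtain ⟨m, hm, hm', h0⟩ := hcr
        refine ⟨m, by rwa [openSegment_symm], hm', ?_⟩
        rw [orient_swap]
        exact neg_ne_zero.mpr h0)) hzx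
    have e := hvis s' s'' hs' hs'' hss
    exact ⟨s, hs, by rw [hsx, ← hsx'', ← e, hsr'], hos⟩
  have hc' := hc
  obtain ⟨z, hz, hz', -⟩ := hc'
  rcases hend x y hxy z (openSegment_subset_segment _ _ _ hz')
    (hC.segment_subset ho hq (openSegment_subset_segment _ _ _ hz)) with hx | hy
  · exact main hxy hc hx
  · exact main hxy.symm hc.symm hy

end Labels

end Visibility

/-- In a maximal planar graph drawn in the plane, the vertices in a convex region that every edge
meeting it enters through one of its ends induce a connected graph: labels that are constant along
the edges inside the region are constant on the region. -/
lemma IsTriangulation.label_eq {n : ℕ} {G : SimpleGraph (Fin n)} (hG : IsTriangulation G)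
    {p : Fin n → Plane} (h : IsPlaneDrawing G p) {C : Set Plane} (hC : Convex ℝ C)
    (hend : ∀ x y, G.Adj x y → ∀ z ∈ segment ℝ (p x) (p y), z ∈ C → p x ∈ C ∨ p y ∈ C)
    {A : Fin n → Prop} (hA : ∀ x y, G.Adj x y → p x ∈ C → p y ∈ C → (A x ↔ A y))
    {u v : Fin n} (hu : p u ∈ C) (hv : p v ∈ C) : A u ↔ A v := by
  by_contra hne
  obtain ⟨⟨u, v⟩, ⟨hu, hv, hun, hne⟩, hmin⟩ := Set.exists_min_image
    {e : Fin n × Fin n | p e.1 ∈ C ∧ p e.2 ∈ C ∧ Uncrossed G p (p e.1) (p e.2) ∧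
      ¬ (A e.1 ↔ A e.2)} (fun e => dist (p e.1) (p e.2)) (Set.toFinite _) (by
    rw [Set.nonempty_iff_ne_empty]
    intro hempty
    have hvis : ∀ u v, p u ∈ C → p v ∈ C → Uncrossed G p (p u) (p v) → (A u ↔ A v) := by
      intro u v hu hv hun
      by_contra hcon
      have : (u, v) ∈ (∅ : Set (Fin n × Fin n)) := hempty ▸ ⟨hu, hv, hun, hcon⟩
      exact this
    obtain ⟨s, hs, hsv, hus⟩ := h.exists_uncrossed hC hend hvis hv hu hv (Or.inl rfl)
    exact hne ((hvis u s hu hs hus).trans hsv))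
  simp only at hu hv hun hne hmin
  have huv : u ≠ v := by
    rintro rfl
    exact hne Iff.rfl
  have hvert : ∀ w, p w ∉ openSegment ℝ (p u) (p v) := by
    intro w hw
    have hws := openSegment_subset_segment _ _ _ hw
    have hwC : p w ∈ C := hC.segment_subset hu hv hws
    have hwu : p w ≠ p u := by
      intro e
      rw [e] at hw
      exact huv (h.injective (left_mem_openSegment_iff.mp hw))
    have hwv : p w ≠ p v := by
      intro e
      rw [e] at hw
      exact huv (h.injective (right_mem_openSegment_iff.mp hw))
    have hdist := dist_add_dist_of_mem_segment hws
    have h1 := dist_pos.mpr hwu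
    have h2 := dist_pos.mpr hwv
    rw [dist_comm] at h1
    by_cases hl : A u ↔ A w
    · have := hmin (w, v) ⟨hwC, hv, hun.mono hws (right_mem_segment ℝ _ _), by
        simp only; rwa [← hl]⟩
      simp only at this
      linarith
    · have := hmin (u, w) ⟨hu, hwC, hun.mono (left_mem_segment ℝ _ _) hws, hl⟩
      simp only at this
      linarith
  have hnadj : ¬ G.Adj u v := fun hadj => hne (hA u v hadj hu hv)
  refine hG.2 u v huv hnadj ⟨p, isPlanarEmbedding_iff.mpr (h.sup_edge huv hvert ?_)⟩
  intro x y hxy z hz hz'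
  have hx : orient (p u) (p v) (p x) = 0 := by
    by_contra h0
    exact hun x y hxy ⟨z, hz, hz', h0⟩
  have hy : orient (p u) (p v) (p y) = 0 := by
    by_contra h0
    exact hun y x hxy.symm ⟨z, hz, by rwa [openSegment_symm], h0⟩
  have hpuv : p u ≠ p v := fun e => huv (h.injective e)
  obtain ⟨k, hk⟩ := exists_combo_of_orient_eq_zero hpuv hx
  obtain ⟨l, hl⟩ := exists_combo_of_orient_eq_zero hpuv hy
  have main : ∀ {x y : Fin n} {k l : ℝ}, G.Adj x y → z ∈ openSegment ℝ (p x) (p y) →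
      p x = (1 - k) • p u + k • p v → p y = (1 - l) • p u + l • p v → k < l → False := by
    intro x y k l hxy hz' hk hl hkl
    have hcomb : ∀ τ, k < τ → τ < l → (1 - τ) • p u + τ • p v ∈ openSegment ℝ (p x) (p y) := by
      intro τ h1 h2
      have hd : l - k ≠ 0 := by linarith
      refine ⟨(l - τ) / (l - k), (τ - k) / (l - k), div_pos (by linarith) (by linarith),
        div_pos (by linarith) (by linarith), by field_simp; ring, ?_⟩
      rw [hk, hl]
      match_scalars <;> field_simp <;> ring
    have hτ : ∃ τ, 0 < τ ∧ τ < 1 ∧ k < τ ∧ τ < l := by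
      obtain ⟨a, b, ha, hb, hab, rfl⟩ := hz
      obtain ⟨s, t, hs, ht, hst, e⟩ := hz'
      rw [hk, hl] at e
      have e' : (b - (s * k + t * l)) • (p v - p u) = 0 := by
        obtain rfl : a = 1 - b := by linarith
        obtain rfl : s = 1 - t := by linarith
        have := sub_eq_zero.mpr e.symm
        rw [← this]
        module
      have e2 := (smul_eq_zero.mp e').resolve_right (sub_ne_zero.mpr hpuv.symm)
      obtain rfl : s = 1 - t := by linarith
      exact ⟨b, hb, by linarith, by nlinarith, by nlinarith⟩
    obtain ⟨τ, h1, h2, h3, h4⟩ := hτ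
    have hk0 : k ≤ 0 := by
      by_contra! hk0
      exact hvert x ⟨1 - k, k, by linarith, hk0, by ring, hk.symm⟩
    have hl1 : 1 ≤ l := by
      by_contra! hl1
      exact hvert y ⟨1 - l, l, by linarith, by linarith, by ring, hl.symm⟩
    have hk1 : k = 0 := by
      by_contra hne
      have := hcomb 0 (lt_of_le_of_ne hk0 hne) (by linarith)
      exact h.notMem hxy u (by simpa using this)
    have hl2 : l = 1 := by
      by_contra hne
      have := hcomb 1 (by linarith) (lt_of_le_of_ne hl1 (Ne.symm hne))
      exact h.notMem hxy v (by simpa using this)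
    obtain rfl : x = u := h.injective (by rw [hk, hk1]; module)
    obtain rfl : y = v := h.injective (by rw [hl, hl2]; module)
    exact hnadj hxy
  rcases lt_trichotomy k l with hkl | rfl | hkl
  · exact main hxy hz' hk hl hkl
  · exact hxy.ne (h.injective (hk.trans hl.symm))
  · exact main hxy.symm (by rwa [openSegment_symm]) hl hk hkl

/-! ### Flipping a corner region into a triangle -/

lemma bary_combo_three {a b c : Plane} (h : orient a b c ≠ 0) {r s t : ℝ} (hrst : r + s + t = 1) :
    bary a b c (r • a + s • b + t • c) = r := by
  obtain rfl : r = 1 - s - t := by linarith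
  rw [bary, div_eq_iff h]
  simp only [orient, PiLp.add_apply, PiLp.smul_apply, smul_eq_mul]
  ring

/-- A projective map fixing the line `a b` pointwise and sending the region beyond the side
`a b`, between the lines `c a` and `c b`, into the open triangle `a b c`. -/
noncomputable def triFlip (a b c x : Plane) : Plane :=
  ((bary a b c x - bary c a b x) / (1 - 4 * bary c a b x)) • a +
    ((bary b c a x - bary c a b x) / (1 - 4 * bary c a b x)) • b +
    (-bary c a b x / (1 - 4 * bary c a b x)) • c

section Flip

variable {a b c : Plane}

lemma triFlip_weights (h : orient a b c ≠ 0) {x : Plane} (hx : bary c a b x ≤ 0) :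
    (bary a b c x - bary c a b x) / (1 - 4 * bary c a b x) +
      (bary b c a x - bary c a b x) / (1 - 4 * bary c a b x) +
      -bary c a b x / (1 - 4 * bary c a b x) = 1 := by
  have := bary_sum h x
  rw [← add_div, ← add_div, div_eq_one_iff_eq (by linarith)]
  linarith

lemma bary_triFlip (h : orient a b c ≠ 0) {x : Plane} (hx : bary c a b x ≤ 0) :
    bary a b c (triFlip a b c x) = (bary a b c x - bary c a b x) / (1 - 4 * bary c a b x) ∧
    bary b c a (triFlip a b c x) = (bary b c a x - bary c a b x) / (1 - 4 * bary c a b x) ∧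
    bary c a b (triFlip a b c x) = -bary c a b x / (1 - 4 * bary c a b x) := by
  have hb : orient b c a ≠ 0 := by rwa [orient_rotate]
  have hc : orient c a b ≠ 0 := by rwa [orient_rotate]
  have hw := triFlip_weights h hx
  refine ⟨bary_combo_three h hw, ?_, ?_⟩
  · rw [triFlip, add_assoc, add_comm]
    exact bary_combo_three hb (by linarith)
  · rw [triFlip, add_comm, ← add_assoc]
    exact bary_combo_three hc (by linarith)

lemma triFlip_mem_openTri (h : orient a b c ≠ 0) {x : Plane} (ha : 0 ≤ bary a b c x)
    (hb : 0 ≤ bary b c a x) (hc : bary c a b x < 0) : triFlip a b c x ∈ openTri a b c := by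
  obtain ⟨h1, h2, h3⟩ := bary_triFlip h hc.le
  refine ⟨?_, ?_, ?_⟩
  · rw [h1]; exact div_pos (by linarith) (by linarith)
  · rw [h2]; exact div_pos (by linarith) (by linarith)
  · rw [h3]; exact div_pos (by linarith) (by linarith)

lemma triFlip_of_bary_eq_zero (h : orient a b c ≠ 0) {x : Plane} (hx : bary c a b x = 0) :
    triFlip a b c x = x := by
  conv_rhs => rw [bary_repr h x]
  simp [triFlip, hx]

lemma triFlip_injOn (h : orient a b c ≠ 0) {x y : Plane} (hx : bary c a b x ≤ 0)
    (hy : bary c a b y ≤ 0) (hxy : triFlip a b c x = triFlip a b c y) : x = y := by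
  obtain ⟨h1, h2, h3⟩ := bary_triFlip h hx
  obtain ⟨h4, h5, h6⟩ := bary_triFlip h hy
  rw [hxy] at h1 h2 h3
  have dx : 1 - 4 * bary c a b x ≠ 0 := by linarith
  have dy : 1 - 4 * bary c a b y ≠ 0 := by linarith
  have e3 : bary c a b x = bary c a b y := by
    have := h3.symm.trans h6
    rw [div_eq_div_iff dx dy] at this
    linarith
  have e1 : bary a b c x = bary a b c y := by
    have := h1.symm.trans h4
    rw [e3, div_left_inj' dy] at this
    linarith
  have e2 : bary b c a x = bary b c a y := by
    have := h2.symm.trans h5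
    rw [e3, div_left_inj' dy] at this
    linarith
  rw [bary_repr h x, bary_repr h y, e1, e2, e3]

lemma exists_triFlip_eq {x y q : Plane} (hx : bary c a b x ≤ 0) (hy : bary c a b y ≤ 0)
    (hq : q ∈ openSegment ℝ (triFlip a b c x) (triFlip a b c y)) :
    ∃ z ∈ openSegment ℝ x y, triFlip a b c z = q := by
  obtain ⟨s, t, hs, ht, hst, rfl⟩ := hq
  have dx : 0 < 1 - 4 * bary c a b x := by linarith
  have dy : 0 < 1 - 4 * bary c a b y := by linarith
  set X := 1 - 4 * bary c a b x with hX
  set Y := 1 - 4 * bary c a b y with hY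
  have hE : 0 < s * Y + t * X := by positivity
  have hsum : s * Y / (s * Y + t * X) + t * X / (s * Y + t * X) = 1 := by
    rw [← add_div, div_self hE.ne']
  refine ⟨(s * Y / (s * Y + t * X)) • x + (t * X / (s * Y + t * X)) • y,
    ⟨_, _, by positivity, by positivity, hsum, rfl⟩, ?_⟩
  have hD : 1 - 4 * (s * Y / (s * Y + t * X) * bary c a b x +
      t * X / (s * Y + t * X) * bary c a b y) = X * Y / (s * Y + t * X) := by
    rw [eq_div_iff hE.ne']
    field_simp
    linear_combination (-s * Y) * hX - t * X * hY + X * Y * hst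
  simp only [triFlip, bary_combo _ _ _ _ _ hsum, hD, ← hX, ← hY]
  match_scalars <;> field_simp <;> ring

end Flip

/-- Suppose no vertex lies inside the triangle `a b c` of a maximal planar graph, and `A` is a
property of vertices that is constant along edges avoiding the corners. Then it is impossible
that the vertices beyond the side `a b` have the property
while those beyond the other two sides do not. -/
lemma IsTriangulation.false_of_label_beyond_side {n : ℕ} {G : SimpleGraph (Fin n)}
    (hG : IsTriangulation G) {p : Fin n → Plane} (h : IsPlaneDrawing G p) {a b c : Fin n}
    (hab : G.Adj a b) (hbc : G.Adj b c) (hac : G.Adj a c)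
    (hout : ∀ w, w ≠ a → w ≠ b → w ≠ c → p w ∉ closedTri (p a) (p b) (p c))
    {A : Fin n → Prop}
    (hA : ∀ x y, x ≠ a → x ≠ b → x ≠ c → y ≠ a → y ≠ b → y ≠ c → G.Adj x y → (A x ↔ A y))
    (hAa : ∀ w, bary (p a) (p b) (p c) (p w) < 0 → ¬ A w)
    (hAb : ∀ w, bary (p b) (p c) (p a) (p w) < 0 → ¬ A w)
    (hAc : ∀ w, bary (p c) (p a) (p b) (p w) < 0 → A w)
    (hex : ∃ w, bary (p c) (p a) (p b) (p w) < 0) : False := by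
  classical
  have ho := h.orient_ne_zero hab hbc hac
  have hoc : orient (p c) (p a) (p b) ≠ 0 := by rwa [orient_rotate, orient_rotate]
  have hc1 : bary (p c) (p a) (p b) (p c) = 1 := bary_first hoc
  have hBa : ∀ w, bary (p c) (p a) (p b) (p w) < 0 → 0 ≤ bary (p a) (p b) (p c) (p w) :=
    fun w hw => not_lt.mp fun hlt => hAa w hlt (hAc w hw)
  have hBb : ∀ w, bary (p c) (p a) (p b) (p w) < 0 → 0 ≤ bary (p b) (p c) (p a) (p w) :=
    fun w hw => not_lt.mp fun hlt => hAb w hlt (hAc w hw)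
  have hne : ∀ w, bary (p c) (p a) (p b) (p w) < 0 → w ≠ a ∧ w ≠ b ∧ w ≠ c := by
    intro w hw
    refine ⟨?_, ?_, ?_⟩ <;> rintro rfl
    · simp at hw
    · simp at hw
    · linarith
  have hnoT : ∀ w, p w ∉ openTri (p a) (p b) (p c) := by
    intro w hw
    by_cases hc : w = a ∨ w = b ∨ w = c
    · refine IsPlaneDrawing.notMem_openTri_of_corners (x := p w) (y := p w) ?_ ?_
        (left_mem_segment ℝ _ _) hw <;> rcases hc with rfl | rfl | rfl <;> simp
    · push Not at hc
      exact hout w hc.1 hc.2.1 hc.2.2 (openTri_subset_closedTri _ _ _ hw)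
  -- Edges leaving the region beyond `a b` end in `a` or `b`.
  have hcw : ∀ w, bary (p c) (p a) (p b) (p w) < 0 → ¬ G.Adj w c := by
    intro w hw hadj
    set γ := bary (p c) (p a) (p b) (p w) with hγ
    have hD : 0 < 1 - γ := by linarith
    have hsum : 1 / (1 - γ) + -γ / (1 - γ) = 1 := by field_simp; ring
    have hm : (1 / (1 - γ)) • p w + (-γ / (1 - γ)) • p c ∈ openSegment ℝ (p w) (p c) :=
      ⟨_, _, by positivity, div_pos (by linarith) hD, hsum, rfl⟩
    have hmc : bary (p c) (p a) (p b) ((1 / (1 - γ)) • p w + (-γ / (1 - γ)) • p c) = 0 := by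
      rw [bary_combo _ _ _ _ _ hsum, hc1, ← hγ]
      field_simp
      ring
    have hmT : (1 / (1 - γ)) • p w + (-γ / (1 - γ)) • p c ∈ closedTri (p a) (p b) (p c) := by
      refine ⟨?_, ?_, hmc.ge⟩
      · rw [bary_combo _ _ _ _ _ hsum, bary_third, mul_zero, add_zero]
        have := hBa w hw
        positivity
      · rw [bary_combo _ _ _ _ _ hsum, bary_second, mul_zero, add_zero]
        have := hBb w hw
        positivity
    obtain ⟨h1, h2, h3⟩ := hne w hw
    rcases h.edge_eq_of_boundary hab hbc hac hadj hm hmT (Or.inr (Or.inr hmc)) with e | e | e <;>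
      rcases Sym2.eq_iff.mp e with ⟨e1, -⟩ | ⟨e1, -⟩ <;> contradiction
  have hnbr : ∀ {w y}, bary (p c) (p a) (p b) (p w) < 0 → G.Adj w y →
      bary (p c) (p a) (p b) (p y) ≤ 0 ∧ 0 ≤ bary (p a) (p b) (p c) (p y) ∧
        0 ≤ bary (p b) (p c) (p a) (p y) := by
    intro w y hw hwy
    obtain ⟨h1, h2, h3⟩ := hne w hw
    by_cases hya : y = a
    · subst hya; simp [bary_first ho]
    by_cases hyb : y = b
    · subst hyb; simp [bary_first (show orient (p y) (p c) (p a) ≠ 0 by rwa [orient_rotate])]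
    by_cases hyc : y = c
    · subst hyc; exact absurd hwy (hcw w hw)
    have hy := (hA w y h1 h2 h3 hya hyb hyc hwy).mp (hAc w hw)
    have ha := not_lt.mp fun hlt => hAa y hlt hy
    have hb := not_lt.mp fun hlt => hAb y hlt hy
    exact ⟨not_lt.mp fun hlt => hout y hya hyb hyc ⟨ha, hb, hlt.le⟩, ha, hb⟩
  -- The flipped drawing.
  set q : Fin n → Plane := fun w =>
    if bary (p c) (p a) (p b) (p w) < 0 then triFlip (p a) (p b) (p c) (p w) else p w with hq
  have hqB : ∀ {w}, bary (p c) (p a) (p b) (p w) < 0 →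
      q w = triFlip (p a) (p b) (p c) (p w) := fun hw => if_pos hw
  have hqN : ∀ {w}, ¬ bary (p c) (p a) (p b) (p w) < 0 → q w = p w := fun hw => if_neg hw
  have hqle : ∀ {w}, bary (p c) (p a) (p b) (p w) ≤ 0 →
      q w = triFlip (p a) (p b) (p c) (p w) := by
    intro w hw
    rcases hw.lt_or_eq with hw | hw
    · exact hqB hw
    · rw [hqN hw.not_lt, triFlip_of_bary_eq_zero ho hw]
  have hqT : ∀ {w}, bary (p c) (p a) (p b) (p w) < 0 → q w ∈ openTri (p a) (p b) (p c) := by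
    intro w hw
    rw [hqB hw]
    exact triFlip_mem_openTri ho (hBa w hw) (hBb w hw) hw
  have hBofT : ∀ {w}, q w ∈ openTri (p a) (p b) (p c) → bary (p c) (p a) (p b) (p w) < 0 := by
    intro w hw
    by_contra hn
    exact hnoT w (hqN hn ▸ hw)
  have hcorner : ∀ {x}, p x ∈ closedTri (p a) (p b) (p c) →
      p x = p a ∨ p x = p b ∨ p x = p c := by
    intro x hx
    by_contra! hn
    exact hout x (fun e => hn.1 (e ▸ rfl)) (fun e => hn.2.1 (e ▸ rfl))
      (fun e => hn.2.2 (e ▸ rfl)) hx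
  have hedge : ∀ {x y}, G.Adj x y →
      (∀ z ∈ openSegment ℝ (q x) (q y), z ∈ openSegment ℝ (p x) (p y) ∧
        z ∉ openTri (p a) (p b) (p c)) ∨
      (bary (p c) (p a) (p b) (p x) ≤ 0 ∧ bary (p c) (p a) (p b) (p y) ≤ 0 ∧
        ∀ z ∈ openSegment ℝ (q x) (q y), z ∈ openTri (p a) (p b) (p c) ∧
          ∃ m ∈ openSegment ℝ (p x) (p y), bary (p c) (p a) (p b) m ≤ 0 ∧
            triFlip (p a) (p b) (p c) m = z) := by
    have key : ∀ {x y}, G.Adj x y → bary (p c) (p a) (p b) (p x) < 0 →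
      (bary (p c) (p a) (p b) (p x) ≤ 0 ∧ bary (p c) (p a) (p b) (p y) ≤ 0 ∧
        ∀ z ∈ openSegment ℝ (q x) (q y), z ∈ openTri (p a) (p b) (p c) ∧
          ∃ m ∈ openSegment ℝ (p x) (p y), bary (p c) (p a) (p b) m ≤ 0 ∧
            triFlip (p a) (p b) (p c) m = z) := by
      intro x y hxy hx
      obtain ⟨hyc, hya, hyb⟩ := hnbr hx hxy
      refine ⟨hx.le, hyc, fun z hz => ?_⟩
      rw [hqB hx, hqle hyc] at hz
      obtain ⟨m, hm, rfl⟩ := exists_triFlip_eq hx.le hyc hz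
      have hm' := hm
      obtain ⟨s, t, hs, ht, hst, rfl⟩ := hm'
      have hmc : bary (p c) (p a) (p b) (s • p x + t • p y) < 0 := by
        rw [bary_combo _ _ _ _ _ hst]
        nlinarith
      refine ⟨triFlip_mem_openTri ho ?_ ?_ hmc, _, hm, hmc.le, rfl⟩
      · rw [bary_combo _ _ _ _ _ hst]
        have := hBa x hx
        positivity
      · rw [bary_combo _ _ _ _ _ hst]
        have := hBb x hx
        positivity
    intro x y hxy
    by_cases hx : bary (p c) (p a) (p b) (p x) < 0
    · exact Or.inr (key hxy hx)
    by_cases hy : bary (p c) (p a) (p b) (p y) < 0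
    · obtain ⟨h1, h2, h3⟩ := key hxy.symm hy
      rw [openSegment_symm ℝ (q y), openSegment_symm ℝ (p y)] at h3
      exact Or.inr ⟨h2, h1, h3⟩
    · rw [hqN hx, hqN hy]
      refine Or.inl fun z hz => ⟨hz, fun hT => ?_⟩
      have hzs := openSegment_subset_segment _ _ _ hz
      refine IsPlaneDrawing.notMem_openTri_of_corners
        (hcorner (h.mem_closedTri_of_edge hab hbc hac hxy.symm ?_ hT))
        (hcorner (h.mem_closedTri_of_edge hab hbc hac hxy hzs hT)) hzs hT
      rwa [segment_symm]
  have hdraw : IsPlaneDrawing G q := by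
    refine ⟨fun x y hxy => ?_, fun {x y} hxy w hw => ?_, fun {x y x' y'} hxy hxy' z hz hz' => ?_⟩
    · by_cases hx : bary (p c) (p a) (p b) (p x) < 0
      · have hy := hBofT (hxy ▸ hqT hx)
        rw [hqB hx, hqB hy] at hxy
        exact h.injective (triFlip_injOn ho hx.le hy.le hxy)
      · have hy : ¬ bary (p c) (p a) (p b) (p y) < 0 := fun hy => hx (hBofT (hxy ▸ hqT hy))
        rw [hqN hx, hqN hy] at hxy
        exact h.injective hxy
    · rcases hedge hxy with he | ⟨-, -, he⟩
      · obtain ⟨h1, h2⟩ := he _ hw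
        have hwn : ¬ bary (p c) (p a) (p b) (p w) < 0 := fun hw => h2 (hqT hw)
        exact h.notMem hxy w (hqN hwn ▸ h1)
      · obtain ⟨h1, m, hm, hmc, hmw⟩ := he _ hw
        have hwB := hBofT h1
        rw [hqB hwB] at hmw
        exact h.notMem hxy w (triFlip_injOn ho hmc hwB.le hmw ▸ hm)
    · rcases hedge hxy with he | ⟨-, -, he⟩ <;> rcases hedge hxy' with he' | ⟨-, -, he'⟩
      · exact h.edge_eq hxy hxy' z (he z hz).1 (he' z hz').1
      · exact absurd (he' z hz').1 (he z hz).2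
      · exact absurd (he z hz).1 (he' z hz').2
      · obtain ⟨-, m, hm, hmc, rfl⟩ := he z hz
        obtain ⟨-, m', hm', hmc', hmm⟩ := he' _ hz'
        obtain rfl := triFlip_injOn ho hmc' hmc hmm
        exact h.edge_eq hxy hxy' _ hm hm'
  -- The corner `c` sees the flipped vertex closest to it.
  obtain ⟨v, hv, hmax⟩ := Finset.exists_max_image
    (Finset.univ.filter fun w => bary (p c) (p a) (p b) (p w) < 0)
    (fun w => bary (p c) (p a) (p b) (q w)) (by simpa [Finset.Nonempty] using hex)
  simp only [Finset.mem_filter, Finset.mem_univ, true_and] at hv hmax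
  have hmax' : ∀ {w}, bary (p c) (p a) (p b) (p w) ≤ 0 →
      bary (p c) (p a) (p b) (q w) ≤ bary (p c) (p a) (p b) (q v) := by
    intro w hw
    rcases hw.lt_or_eq with hw | hw
    · exact hmax w hw
    · rw [hqN hw.not_lt, hw]
      exact (hqT hv).2.2.le
  have hqc : q c = p c := hqN (by rw [hc1]; norm_num)
  have hlt1 : bary (p c) (p a) (p b) (q v) < 1 := by
    have := bary_sum ho (q v)
    have := (hqT hv).1
    have := (hqT hv).2.1
    linarith
  have hnew : ∀ z ∈ openSegment ℝ (q c) (q v), z ∈ openTri (p a) (p b) (p c) ∧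
      bary (p c) (p a) (p b) (q v) < bary (p c) (p a) (p b) z := by
    intro z hz
    rw [hqc] at hz
    refine ⟨openTri_of_openSegment (hqT hv)
      (h.corners_mem_closedTri hab hbc hac (w := c) (by simp)) (by rwa [openSegment_symm]), ?_⟩
    obtain ⟨s, t, hs, ht, hst, rfl⟩ := hz
    rw [bary_combo _ _ _ _ _ hst, hc1]
    nlinarith
  have hvc : c ≠ v := fun e => (hne v hv).2.2 e.symm
  refine hG.2 c v hvc (fun hadj => hcw v hv hadj.symm)
    ⟨q, isPlanarEmbedding_iff.mpr (hdraw.sup_edge hvc (fun w hw => ?_) fun x y hxy z hz hz' => ?_)⟩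
  · obtain ⟨h1, h2⟩ := hnew _ hw
    exact (hmax w (hBofT h1)).not_gt h2
  · obtain ⟨h1, h2⟩ := hnew _ hz
    rcases hedge hxy with he | ⟨hx, hy, -⟩
    · exact (he z hz').2 h1
    · obtain ⟨s, t, hs, ht, hst, rfl⟩ := hz'
      rw [bary_combo _ _ _ _ _ hst] at h2
      have := hmax' hx
      have := hmax' hy
      nlinarith

/-! ### Separating triangles have vertices on both sides -/

lemma IsSepTriangle.exists_label {n : ℕ} (hn : 4 ≤ n) {G : SimpleGraph (Fin n)} {a b c : Fin n}
    (hs : IsSepTriangle G a b c) :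
    ∃ A : Fin n → Prop, (∃ u, u ≠ a ∧ u ≠ b ∧ u ≠ c ∧ A u) ∧
      (∃ v, v ≠ a ∧ v ≠ b ∧ v ≠ c ∧ ¬ A v) ∧
      ∀ x y, x ≠ a → x ≠ b → x ≠ c → y ≠ a → y ≠ b → y ≠ c → G.Adj x y → (A x ↔ A y) := by
  have hmem : ∀ w, w ∈ {v : Fin n | v ∉ ({a, b, c} : Set (Fin n))} ↔ w ≠ a ∧ w ≠ b ∧ w ≠ c := by
    intro w; simp
  have hnonempty : Nonempty {v : Fin n | v ∉ ({a, b, c} : Set (Fin n))} := by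
    obtain ⟨w, hw⟩ : ∃ w, w ∉ ({a, b, c} : Finset (Fin n)) := by
      by_contra! hall
      have h1 : Finset.univ ⊆ ({a, b, c} : Finset (Fin n)) := fun w _ => hall w
      have h2 := (Finset.card_le_card h1).trans Finset.card_le_three
      rw [Finset.card_univ, Fintype.card_fin] at h2
      omega
    exact ⟨w, by simpa using hw⟩
  have hpre : ¬ (G.induce {v : Fin n | v ∉ ({a, b, c} : Set (Fin n))}).Preconnected :=
    fun hp => hs.2.2.2 ⟨hp⟩
  simp only [SimpleGraph.Preconnected, not_forall] at hpre
  obtain ⟨u, v, huv⟩ := hpre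
  refine ⟨fun w => ∃ hw, (G.induce {v : Fin n | v ∉ ({a, b, c} : Set (Fin n))}).Reachable u ⟨w, hw⟩,
    ⟨u, ?_⟩, ⟨v, ?_⟩, ?_⟩
  · obtain ⟨h1, h2, h3⟩ := (hmem u).mp u.2
    exact ⟨h1, h2, h3, u.2, SimpleGraph.Reachable.refl u⟩
  · obtain ⟨h1, h2, h3⟩ := (hmem v).mp v.2
    exact ⟨h1, h2, h3, fun ⟨_, hr⟩ => huv hr⟩
  · intro x y hxa hxb hxc hya hyb hyc hxy
    have hx := (hmem x).mpr ⟨hxa, hxb, hxc⟩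
    have hy := (hmem y).mpr ⟨hya, hyb, hyc⟩
    have hadj : (G.induce {v : Fin n | v ∉ ({a, b, c} : Set (Fin n))}).Adj ⟨x, hx⟩ ⟨y, hy⟩ := hxy
    exact ⟨fun ⟨_, hr⟩ => ⟨hy, hr.trans hadj.reachable⟩,
      fun ⟨_, hr⟩ => ⟨hx, hr.trans hadj.symm.reachable⟩⟩

section Sides

variable {n : ℕ} {G : SimpleGraph (Fin n)} {p : Fin n → Plane} {a b c : Fin n}

lemma IsSepTriangle.exists_notMem_closedTri (hn : 4 ≤ n) (hG : IsTriangulation G)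
    (h : IsPlaneDrawing G p) (hs : IsSepTriangle G a b c) :
    ∃ w, p w ∉ closedTri (p a) (p b) (p c) := by
  obtain ⟨A, ⟨u, hua, hub, huc, hu⟩, ⟨v, hva, hvb, hvc, hv⟩, hA⟩ := hs.exists_label hn
  obtain ⟨hab, hbc, hac, -⟩ := hs
  by_contra! hall
  have hcorner : ∀ w, p w ∉ openTri (p a) (p b) (p c) → p w = p a ∨ p w = p b ∨ p w = p c := by
    intro w hw
    by_contra! hn
    exact hw (h.mem_openTri hab hbc hac (hall w) (fun e => hn.1 (e ▸ rfl))
      (fun e => hn.2.1 (e ▸ rfl)) fun e => hn.2.2 (e ▸ rfl))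
  have hne : ∀ w, p w ∈ openTri (p a) (p b) (p c) → w ≠ a ∧ w ≠ b ∧ w ≠ c := by
    intro w hw
    refine ⟨?_, ?_, ?_⟩ <;> rintro rfl <;>
      exact IsPlaneDrawing.notMem_openTri_of_corners (by simp) (by simp)
        (left_mem_segment ℝ (p w) (p w)) hw
  refine hv ((hG.label_eq h (convex_openTri (p a) (p b) (p c)) ?_ ?_
    (h.mem_openTri hab hbc hac (hall u) hua hub huc)
    (h.mem_openTri hab hbc hac (hall v) hva hvb hvc)).mp hu)
  · intro x y hxy z hz hzT
    by_contra! hn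
    exact IsPlaneDrawing.notMem_openTri_of_corners (hcorner x hn.1) (hcorner y hn.2) hz hzT
  · intro x y hxy hx hy
    obtain ⟨h1, h2, h3⟩ := hne x hx
    obtain ⟨h4, h5, h6⟩ := hne y hy
    exact hA x y h1 h2 h3 h4 h5 h6 hxy

lemma IsTriangulation.label_beyond_line (hG : IsTriangulation G) (h : IsPlaneDrawing G p)
    (x y z : Plane) {A : Fin n → Prop}
    (hA : ∀ u v, bary x y z (p u) < 0 → bary x y z (p v) < 0 → G.Adj u v → (A u ↔ A v)) :
    (∀ w, bary x y z (p w) < 0 → A w) ∨ ∀ w, bary x y z (p w) < 0 → ¬ A w := by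
  have key : ∀ u v, bary x y z (p u) < 0 → bary x y z (p v) < 0 → (A u ↔ A v) := by
    intro u v hu hv
    refine hG.label_eq h (C := {m | bary x y z m < 0}) ?_ ?_ (fun u v huv hu hv => hA u v hu hv huv)
      hu hv
    · rw [convex_iff_forall_pos]
      intro m hm m' hm' s t hs ht hst
      simp only [Set.mem_ofPred_eq] at hm hm' ⊢
      rw [bary_combo _ _ _ _ _ hst]
      nlinarith
    · rintro u v huv _ ⟨s, t, hs, ht, hst, rfl⟩ hm
      simp only [Set.mem_ofPred_eq] at hm ⊢
      rw [bary_combo _ _ _ _ _ hst] at hm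
      by_contra! hn
      nlinarith [mul_nonneg hs hn.1, mul_nonneg ht hn.2]
  by_cases hex : ∃ w, bary x y z (p w) < 0 ∧ A w
  · obtain ⟨w, hw, hAw⟩ := hex
    exact Or.inl fun w' hw' => (key w w' hw hw').mp hAw
  · exact Or.inr fun w hw hAw => hex ⟨w, hw, hAw⟩

lemma IsSepTriangle.exists_mem_closedTri (hn : 4 ≤ n) (hG : IsTriangulation G)
    (h : IsPlaneDrawing G p) (hs : IsSepTriangle G a b c) :
    ∃ w, w ≠ a ∧ w ≠ b ∧ w ≠ c ∧ p w ∈ closedTri (p a) (p b) (p c) := by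
  obtain ⟨A, ⟨u, hua, hub, huc, hu⟩, ⟨v, hva, hvb, hvc, hv⟩, hA⟩ := hs.exists_label hn
  obtain ⟨hab, hbc, hac, -⟩ := hs
  by_contra! hout
  have hin : ∀ w, (w = a ∨ w = b ∨ w = c) → p w ∈ closedTri (p a) (p b) (p c) :=
    fun w => h.corners_mem_closedTri hab hbc hac
  have hne : ∀ w, p w ∉ closedTri (p a) (p b) (p c) → w ≠ a ∧ w ≠ b ∧ w ≠ c := by
    intro w hw
    have := mt (hin w) hw
    tauto
  have hbeyond : ∀ w, p w ∉ closedTri (p a) (p b) (p c) → bary (p a) (p b) (p c) (p w) < 0 ∨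
      bary (p b) (p c) (p a) (p w) < 0 ∨ bary (p c) (p a) (p b) (p w) < 0 := by
    intro w hw
    by_contra! hn
    exact hw hn
  have hA' : ∀ x y, p x ∉ closedTri (p a) (p b) (p c) → p y ∉ closedTri (p a) (p b) (p c) →
      G.Adj x y → (A x ↔ A y) := by
    intro x y hx hy
    obtain ⟨h1, h2, h3⟩ := hne x hx
    obtain ⟨h4, h5, h6⟩ := hne y hy
    exact hA x y h1 h2 h3 h4 h5 h6
  have hla := hG.label_beyond_line h (p a) (p b) (p c) (A := A) fun x y hx hy =>
    hA' x y (fun hT => hx.not_ge hT.1) fun hT => hy.not_ge hT.1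
  have hlb := hG.label_beyond_line h (p b) (p c) (p a) (A := A) fun x y hx hy =>
    hA' x y (fun hT => hx.not_ge hT.2.1) fun hT => hy.not_ge hT.2.1
  have hlc := hG.label_beyond_line h (p c) (p a) (p b) (A := A) fun x y hx hy =>
    hA' x y (fun hT => hx.not_ge hT.2.2) fun hT => hy.not_ge hT.2.2
  have hu' := hbeyond u (hout u hua hub huc)
  have hv' := hbeyond v (hout v hva hvb hvc)
  have flip : ∀ {x y z : Fin n}, G.Adj x y → G.Adj y z → G.Adj x z →
      (∀ w, p w ∈ closedTri (p x) (p y) (p z) ↔ p w ∈ closedTri (p a) (p b) (p c)) →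
      (∀ w, w ≠ x → w ≠ y → w ≠ z → p w ∉ closedTri (p a) (p b) (p c)) →
      ∀ P : Fin n → Prop, (∀ x y, p x ∉ closedTri (p a) (p b) (p c) →
        p y ∉ closedTri (p a) (p b) (p c) → G.Adj x y → (P x ↔ P y)) →
      (∀ w, bary (p x) (p y) (p z) (p w) < 0 → ¬ P w) →
      (∀ w, bary (p y) (p z) (p x) (p w) < 0 → ¬ P w) →
      (∀ w, bary (p z) (p x) (p y) (p w) < 0 → P w) →
      ∀ w, ¬ bary (p z) (p x) (p y) (p w) < 0 := by
    intro x y z hxy hyz hxz hT hout P hP hx hy hz w hw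
    refine hG.false_of_label_beyond_side h hxy hyz hxz
      (fun w h1 h2 h3 => mt (hT w).mp (hout w h1 h2 h3)) ?_ hx hy hz ⟨w, hw⟩
    intro u v h1 h2 h3 h4 h5 h6
    exact hP u v (hout u h1 h2 h3) (hout v h4 h5 h6)
  have hnA : ∀ x y, p x ∉ closedTri (p a) (p b) (p c) → p y ∉ closedTri (p a) (p b) (p c) →
      G.Adj x y → (¬ A x ↔ ¬ A y) := fun x y hx hy hxy => not_congr (hA' x y hx hy hxy)
  have ha := flip hbc hac.symm hab.symm (fun w => mem_closedTri_rotate)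
    fun w h1 h2 h3 => hout w h3 h1 h2
  have hb := flip hac.symm hab hbc.symm
    (fun w => mem_closedTri_rotate.trans mem_closedTri_rotate) fun w h1 h2 h3 => hout w h2 h3 h1
  have hc := flip hab hbc hac (fun w => Iff.rfl) hout
  have ha1 := ha A hA'
  have ha2 := ha (fun w => ¬ A w) hnA
  have hb1 := hb A hA'
  have hb2 := hb (fun w => ¬ A w) hnA
  have hc1 := hc A hA'
  have hc2 := hc (fun w => ¬ A w) hnA
  simp only [not_not] at ha2 hb2 hc2
  rcases hla with hla | hla <;> rcases hlb with hlb | hlb <;> rcases hlc with hlc | hlc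
  · exact hv (hv'.elim (hla v) (Or.elim · (hlb v) (hlc v)))
  · exact hv (hv'.elim (hla v) (Or.elim · (hlb v) fun e => absurd e (hc2 hla hlb hlc v)))
  · exact hv (hv'.elim (hla v) (Or.elim · (fun e => absurd e (hb2 hlc hla hlb v)) (hlc v)))
  · exact hu'.elim (fun e => absurd e (ha1 hlb hlc hla u)) (Or.elim · (hlb u) (hlc u)) hu
  · exact hv (hv'.elim (fun e => absurd e (ha2 hlb hlc hla v)) (Or.elim · (hlb v) (hlc v)))
  · exact hu'.elim (hla u) (Or.elim · (fun e => absurd e (hb1 hlc hla hlb u)) (hlc u)) hu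
  · exact hu'.elim (hla u) (Or.elim · (hlb u) fun e => absurd e (hc1 hla hlb hlc u)) hu
  · exact hu'.elim (hla u) (Or.elim · (hlb u) (hlc u)) hu

end Sides

/-! ### Laminarity of triangles -/

section Laminar

variable {V : Type*} {G : SimpleGraph V} {p : V → Plane} {s t : Finset V}

lemma SimpleGraph.IsNClique.exists_eq_insert [DecidableEq V] (ht : G.IsNClique 3 t) {u : V}
    (hu : u ∈ t) : ∃ v w, G.Adj u v ∧ G.Adj v w ∧ G.Adj u w ∧ t = {u, v, w} := by
  obtain ⟨a, b, c, hab, hac, hbc, rfl⟩ := SimpleGraph.is3Clique_iff.mp ht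
  simp only [Finset.mem_insert, Finset.mem_singleton] at hu
  rcases hu with rfl | rfl | rfl
  · exact ⟨b, c, hab, hbc, hac, rfl⟩
  · exact ⟨c, a, hbc, hac.symm, hab.symm, by ext; simp; tauto⟩
  · exact ⟨a, b, hac.symm, hab, hbc.symm, by ext; simp; tauto⟩

/-- The vertices drawn in the convex hull of the vertices in `t`. -/
noncomputable def vertsIn [Fintype V] (p : V → Plane) (t : Finset V) : Finset V :=
  open Classical in Finset.univ.filter fun w => p w ∈ convexHull ℝ (p '' t)

lemma mem_vertsIn [Fintype V] {w : V} : w ∈ vertsIn p t ↔ p w ∈ convexHull ℝ (p '' t) := by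
  simp [vertsIn]

lemma subset_vertsIn [Fintype V] : t ⊆ vertsIn p t := fun _ hw =>
  mem_vertsIn.mpr (subset_convexHull ℝ _ ⟨_, hw, rfl⟩)

lemma vertsIn_subset [Fintype V] (hst : s ⊆ vertsIn p t) : vertsIn p s ⊆ vertsIn p t := by
  intro w hw
  rw [mem_vertsIn] at hw ⊢
  refine convexHull_min ?_ (convex_convexHull ℝ _) hw
  rintro _ ⟨v, hv, rfl⟩
  exact mem_vertsIn.mp (hst hv)

namespace IsPlaneDrawing

lemma mem_vertsIn_iff [Fintype V] [DecidableEq V] (h : IsPlaneDrawing G p) {a b c w : V}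
    (hab : G.Adj a b) (hbc : G.Adj b c) (hac : G.Adj a c) :
    w ∈ vertsIn p {a, b, c} ↔ p w ∈ closedTri (p a) (p b) (p c) := by
  rw [mem_vertsIn, ← convexHull_eq_closedTri (h.orient_ne_zero hab hbc hac)]
  simp [Set.image_insert_eq]

/-- A corner of a triangle lies in no other convex polygon with vertices in that triangle. -/
lemma mem_of_mem_vertsIn [Fintype V] (h : IsPlaneDrawing G p) (hs : G.IsNClique 3 s)
    (hts : t ⊆ vertsIn p s) {u : V} (hus : u ∈ s) (hut : u ∈ vertsIn p t) : u ∈ t := by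
  classical
  by_contra hu
  obtain ⟨v, w, huv, hvw, huw, rfl⟩ := hs.exists_eq_insert hus
  have ho := h.orient_ne_zero huv hvw huw
  have hconv : Convex ℝ {x | bary (p u) (p v) (p w) x < 1} := by
    rw [convex_iff_forall_pos]
    intro x hx y hy k l hk hl hkl
    simp only [Set.mem_ofPred_eq] at hx hy ⊢
    rw [bary_combo _ _ _ _ _ hkl]
    nlinarith
  have hlt : p u ∈ {x | bary (p u) (p v) (p w) x < 1} := by
    refine convexHull_min ?_ hconv (mem_vertsIn.mp hut)
    rintro _ ⟨x, hx, rfl⟩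
    obtain ⟨h1, h2, h3⟩ := (h.mem_vertsIn_iff huv hvw huw).mp (hts hx)
    have hsum := bary_sum ho (p x)
    change bary (p u) (p v) (p w) (p x) < 1
    refine lt_of_le_of_ne (by linarith) fun h1' => hu ?_
    have h2' : bary (p v) (p w) (p u) (p x) = 0 := by linarith
    have h3' : bary (p w) (p u) (p v) (p x) = 0 := by linarith
    have hx' := bary_repr ho (p x)
    rw [h1', h2', h3'] at hx'
    rwa [← h.injective (show p x = p u by simpa using hx')]
  simp only [Set.mem_ofPred_eq, bary_first ho, lt_irrefl] at hlt

lemma vertsIn_injective [Fintype V] (h : IsPlaneDrawing G p) (hs : G.IsNClique 3 s)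
    (ht : G.IsNClique 3 t) (hst : vertsIn p s = vertsIn p t) : s = t :=
  Finset.eq_of_subset_of_card_le
    (fun _ hu => h.mem_of_mem_vertsIn hs (hst ▸ subset_vertsIn) hu (hst ▸ subset_vertsIn hu))
    (by rw [hs.card_eq, ht.card_eq])

/-- If a triangle has a corner strictly inside another one, then it is contained in it. -/
lemma subset_vertsIn_of_mem [Fintype V] (h : IsPlaneDrawing G p) (hs : G.IsNClique 3 s)
    (ht : G.IsNClique 3 t) {u : V} (hus : u ∈ s) (hut : u ∈ vertsIn p t) (hu : u ∉ t) :
    s ⊆ vertsIn p t := by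
  classical
  obtain ⟨a, b, c, hab, hac, hbc, rfl⟩ := SimpleGraph.is3Clique_iff.mp ht
  simp only [Finset.mem_insert, Finset.mem_singleton, not_or] at hu
  intro w hw
  by_cases huw : u = w
  · exact huw ▸ hut
  rw [h.mem_vertsIn_iff hab hbc hac] at hut ⊢
  exact h.mem_closedTri_of_edge hab hbc hac (hs.isClique hus hw huw) (left_mem_segment ℝ _ _)
    (h.mem_openTri hab hbc hac hut hu.1 hu.2.1 hu.2.2)

/-- Triangles with a common interior vertex are nested. -/
lemma subset_or_subset_of_mem [Fintype V] (h : IsPlaneDrawing G p) (hs : G.IsNClique 3 s)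
    (ht : G.IsNClique 3 t) {v : V} (hvs : v ∈ vertsIn p s) (hvs' : v ∉ s)
    (hvt : v ∈ vertsIn p t) (hvt' : v ∉ t) : s ⊆ vertsIn p t ∨ t ⊆ vertsIn p s := by
  classical
  by_contra! hn
  obtain ⟨hst, hts⟩ := hn
  obtain ⟨x, hxs, hxt⟩ := Finset.not_subset.mp hst
  obtain ⟨a, b, c, hab, hac, hbc, rfl⟩ := SimpleGraph.is3Clique_iff.mp hs
  obtain ⟨a', b', c', hab', hac', hbc', rfl⟩ := SimpleGraph.is3Clique_iff.mp ht
  have hcorner : ∀ y ∈ ({a', b', c'} : Finset V), p y ∈ closedTri (p a) (p b) (p c) →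
      p y = p a ∨ p y = p b ∨ p y = p c := by
    intro y hy hyT
    by_contra! hne
    refine hts (h.subset_vertsIn_of_mem ht hs hy ((h.mem_vertsIn_iff hab hbc hac).mpr hyT) ?_)
    simp only [Finset.mem_insert, Finset.mem_singleton, not_or]
    exact ⟨fun e => hne.1 (e ▸ rfl), fun e => hne.2.1 (e ▸ rfl), fun e => hne.2.2 (e ▸ rfl)⟩
  have hxT : p x ∈ closedTri (p a) (p b) (p c) :=
    (h.mem_vertsIn_iff hab hbc hac).mp (subset_vertsIn hxs)
  simp only [Finset.mem_insert, Finset.mem_singleton, not_or] at hvs' hvt'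
  rw [h.mem_vertsIn_iff hab hbc hac] at hvs
  rw [h.mem_vertsIn_iff hab' hbc' hac'] at hvt hxt
  have hvT := h.mem_openTri hab hbc hac hvs hvs'.1 hvs'.2.1 hvs'.2.2
  have hvT' := h.mem_openTri hab' hbc' hac' hvt hvt'.1 hvt'.2.1 hvt'.2.2
  obtain ⟨m, hm, hmT', h0⟩ := exists_exit_closedTri hvT' hxt
  have hmT := openTri_of_openSegment hvT hxT hm
  have side : ∀ {y z}, G.Adj y z → y ∈ ({a', b', c'} : Finset V) → z ∈ ({a', b', c'} : Finset V) →
      m ∉ segment ℝ (p y) (p z) := by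
    intro y z hyz hy hz hmyz
    refine notMem_openTri_of_corners
      (hcorner y hy (h.mem_closedTri_of_edge hab hbc hac hyz.symm ?_ hmT))
      (hcorner z hz (h.mem_closedTri_of_edge hab hbc hac hyz hmyz hmT)) hmyz hmT
    rwa [segment_symm]
  have hmT2 := mem_closedTri_rotate.mpr hmT'
  rcases h0 with h0 | h0 | h0
  · exact side hbc' (by simp) (by simp)
      (mem_segment_of_bary_eq_zero (h.orient_ne_zero hab' hbc' hac') hmT' h0)
  · exact side hac'.symm (by simp) (by simp) (mem_segment_of_bary_eq_zero
      (h.orient_ne_zero hbc' hac'.symm hab'.symm) hmT2 h0)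
  · exact side hab' (by simp) (by simp) (mem_segment_of_bary_eq_zero
      (h.orient_ne_zero hac'.symm hab' hbc'.symm) (mem_closedTri_rotate.mpr hmT2) h0)

end IsPlaneDrawing

end Laminar

/-! ### Counting a laminar family -/

/-- A family of triples with a laminar interior structure has at most `|V| - 4` members, provided
each member has a vertex inside and a vertex outside. -/
lemma card_le_of_laminar {V : Type*} [Fintype V] [DecidableEq V] {F : Finset (Finset V)}
    {N : Finset V → Finset V} (hcard : ∀ t ∈ F, t.card = 3) (hsub : ∀ t ∈ F, t ⊆ N t)
    (hmono : ∀ s ∈ F, ∀ t ∈ F, s ⊆ N t → N s ⊆ N t)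
    (hinj : ∀ s ∈ F, ∀ t ∈ F, N s = N t → s = t)
    (hcorner : ∀ s ∈ F, ∀ t ∈ F, ∀ u ∈ s, u ∈ N t → u ∉ t → s ⊆ N t)
    (hnested : ∀ s ∈ F, ∀ t ∈ F, ∀ v ∈ N s, v ∉ s → v ∈ N t → v ∉ t → s ⊆ N t ∨ t ⊆ N s)
    (hin : ∀ t ∈ F, ∃ v ∈ N t, v ∉ t) (hout : ∀ t ∈ F, ∃ v, v ∉ N t) :
    F.card ≤ Fintype.card V - 4 := by
  have hdiff : ∀ s ∈ F, ∀ t ∈ F, s ≠ t → ∃ u ∈ s, u ∉ t := by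
    intro s hs t ht hne
    by_contra! hst
    exact hne (Finset.eq_of_subset_of_card_le hst (by rw [hcard s hs, hcard t ht]))
  have hchoice : ∀ t ∈ F, ∃ v ∈ N t, v ∉ t ∧ ∀ s ∈ F, N s ⊂ N t → v ∈ N s → v ∈ s := by
    intro t ht
    rcases (F.filter fun s => N s ⊂ N t).eq_empty_or_nonempty with he | hne
    · obtain ⟨v, hv, hvt⟩ := hin t ht
      refine ⟨v, hv, hvt, fun s hs hst => ?_⟩
      have : s ∈ F.filter fun s => N s ⊂ N t := Finset.mem_filter.mpr ⟨hs, hst⟩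
      simp [he] at this
    · obtain ⟨m, hm, hmax⟩ := Finset.exists_max_image _ (fun s => (N s).card) hne
      simp only [Finset.mem_filter] at hm hmax
      obtain ⟨u, hum, hut⟩ := hdiff m hm.1 t ht (by rintro rfl; exact hm.2.ne rfl)
      refine ⟨u, hm.2.subset (hsub m hm.1 hum), hut, fun s hs hst hus => ?_⟩
      by_contra hus'
      have hms := hmono m hm.1 s hs (hcorner m hm.1 s hs u hum hus hus')
      have := hinj m hm.1 s hs (Finset.eq_of_subset_of_card_le hms (hmax s ⟨hs, hst⟩))
      exact hus' (this ▸ hum)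
  rcases F.eq_empty_or_nonempty with rfl | ⟨t₀, ht₀⟩
  · simp
  have : Nonempty V := ⟨(hout t₀ ht₀).choose⟩
  choose! f hfN hft hfs using hchoice
  have hfinj : Set.InjOn f (F : Set (Finset V)) := by
    have key : ∀ s ∈ F, ∀ t ∈ F, f s = f t → s ⊆ N t → s = t := by
      intro s hs t ht hst hsub
      by_contra hne
      have hss : N s ⊂ N t := (hmono s hs t ht hsub).ssubset_of_ne fun e => hne (hinj s hs t ht e)
      exact hft s hs (hst ▸ hfs t ht s hs hss (hst ▸ hfN s hs))
    intro s hs t ht hst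
    rcases hnested s hs t ht (f s) (hfN s hs) (hft s hs) (hst ▸ hfN t ht) (hst ▸ hft t ht) with
      h | h
    · exact key s hs t ht hst h
    · exact (key t ht s hs hst.symm h).symm
  set U := Finset.univ.filter fun v => ∀ t ∈ F, v ∈ N t → v ∈ t with hU
  -- Every member lies below a maximal one, and the corners of the latter are in `U`.
  have htop : ∀ t ∈ F, ∃ m ∈ F, N t ⊆ N m ∧ m ⊆ U := by
    intro t ht
    obtain ⟨m, hm, hmax⟩ := Finset.exists_max_image (F.filter fun s => N t ⊆ N s)
      (fun s => (N s).card) ⟨t, Finset.mem_filter.mpr ⟨ht, subset_rfl⟩⟩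
    simp only [Finset.mem_filter] at hm hmax
    refine ⟨m, hm.1, hm.2, fun u hu => ?_⟩
    simp only [hU, Finset.mem_filter, Finset.mem_univ, true_and]
    intro s hs hus
    by_contra hus'
    have hms := hmono m hm.1 s hs (hcorner m hm.1 s hs u hu hus hus')
    have := hinj m hm.1 s hs
      (Finset.eq_of_subset_of_card_le hms (hmax s ⟨hs, hm.2.trans hms⟩))
    exact hus' (this ▸ hu)
  have hU4 : 4 ≤ U.card := by
    obtain ⟨m, hm, -, hmU⟩ := htop t₀ ht₀
    obtain ⟨u, huU, hum⟩ : ∃ u ∈ U, u ∉ m := by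
      obtain ⟨w, hw⟩ := hout m hm
      by_cases hwU : w ∈ U
      · exact ⟨w, hwU, fun hwm => hw (hsub m hm hwm)⟩
      · simp only [hU, Finset.mem_filter, Finset.mem_univ, true_and, not_forall] at hwU
        obtain ⟨t, ht, hwt, -⟩ := hwU
        obtain ⟨m', hm', htm', hmU'⟩ := htop t ht
        obtain ⟨u, hu, hum⟩ := hdiff m' hm' m hm (by rintro rfl; exact hw (htm' hwt))
        exact ⟨u, hmU' hu, hum⟩
    calc 4 = (insert u m).card := by rw [Finset.card_insert_of_notMem hum, hcard m hm]
      _ ≤ U.card := Finset.card_le_card (Finset.insert_subset huU hmU)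
  have himage : F.image f ⊆ Uᶜ := by
    intro v hv
    obtain ⟨t, ht, rfl⟩ := Finset.mem_image.mp hv
    simp only [hU, Finset.mem_compl, Finset.mem_filter, Finset.mem_univ, true_and]
    exact fun h => hft t ht (h t ht (hfN t ht))
  have hle := Finset.card_le_card himage
  rw [Finset.card_image_of_injOn hfinj, Finset.card_compl] at hle
  omega

/-- Every planar triangulation on n ≥ 4 vertices has at most n − 4 separating
triangles. -/
theorem triangulation_sepTriangle_count
    (n : ℕ) (hn : 4 ≤ n) (G : SimpleGraph (Fin n)) (hG : IsTriangulation G) :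
    Set.ncard {t : Finset (Fin n) |
      ∃ a b c : Fin n, t = {a, b, c} ∧ IsSepTriangle G a b c} ≤ n - 4 := by
  classical
  obtain ⟨p, hp⟩ := hG.1
  have h := isPlanarEmbedding_iff.mp hp
  set F := Finset.univ.filter fun t : Finset (Fin n) =>
    ∃ a b c : Fin n, t = {a, b, c} ∧ IsSepTriangle G a b c with hF
  have hmem : ∀ t ∈ F, ∃ a b c : Fin n, t = {a, b, c} ∧ IsSepTriangle G a b c := by
    simp [hF]
  have hclique : ∀ t ∈ F, G.IsNClique 3 t := by
    intro t ht
    obtain ⟨a, b, c, rfl, hs⟩ := hmem t ht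
    exact SimpleGraph.is3Clique_iff.mpr ⟨a, b, c, hs.1, hs.2.2.1, hs.2.1, rfl⟩
  have hcard : F.card ≤ Fintype.card (Fin n) - 4 := by
    refine card_le_of_laminar (N := vertsIn p) (fun t ht => (hclique t ht).card_eq)
      (fun t _ => subset_vertsIn) (fun s _ t _ => vertsIn_subset)
      (fun s hs t ht => h.vertsIn_injective (hclique s hs) (hclique t ht))
      (fun s hs t ht u => h.subset_vertsIn_of_mem (hclique s hs) (hclique t ht))
      (fun s hs t ht v => h.subset_or_subset_of_mem (hclique s hs) (hclique t ht))
      (fun t ht => ?_) (fun t ht => ?_)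
    · obtain ⟨a, b, c, rfl, hs⟩ := hmem t ht
      obtain ⟨w, ha, hb, hc, hw⟩ := hs.exists_mem_closedTri hn hG h
      exact ⟨w, (h.mem_vertsIn_iff hs.1 hs.2.1 hs.2.2.1).mpr hw, by simp [ha, hb, hc]⟩
    · obtain ⟨a, b, c, rfl, hs⟩ := hmem t ht
      obtain ⟨w, hw⟩ := hs.exists_notMem_closedTri hn hG h
      exact ⟨w, mt (h.mem_vertsIn_iff hs.1 hs.2.1 hs.2.2.1).mp hw⟩
  rw [Fintype.card_fin] at hcard
  convert hcard
  rw [← Set.ncard_coe_finset]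
  simp [hF]
end

section
/- In a planar triangulation, every vertex v of a separating triangle D is incident to at least one edge that lies inside D and belongs to no separating triangle. -/
/-- The segment between the images of `u` and `v` meets a drawing only in its two endpoints. -/
def IsFreeSegment {n : ℕ} (G : SimpleGraph (Fin n)) (p : Fin n → Plane) (u v : Fin n) : Prop :=
  (∀ w, p w ∈ segment ℝ (p u) (p v) → w = u ∨ w = v) ∧
  ∀ g h, G.Adj g h → ∀ m ∈ segment ℝ (p u) (p v), m ∈ segment ℝ (p g) (p h) →
    m = p u ∨ m = p v

/-- A free segment can be added to a plane drawing. -/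
theorem IsPlanarEmbedding.sup_edge {n : ℕ} {G : SimpleGraph (Fin n)} {p : Fin n → Plane}
    (hp : IsPlanarEmbedding G p) {u v : Fin n} (hf : IsFreeSegment G p u v) :
    IsPlanarEmbedding (G ⊔ SimpleGraph.fromEdgeSet {s(u, v)}) p := by
  obtain ⟨hinj, hvert, hedge⟩ := hp
  obtain ⟨hfv, hfe⟩ := hf
  have adj_cases : ∀ {x y}, (G ⊔ SimpleGraph.fromEdgeSet {s(u, v)}).Adj x y →
      G.Adj x y ∨ (x = u ∧ y = v) ∨ (x = v ∧ y = u) := by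
    intro x y h
    exact h.imp_right fun h' => by simpa using h'.1
  have key : ∀ g h, G.Adj g h → ∀ m ∈ segment ℝ (p u) (p v), m ∈ segment ℝ (p g) (p h) →
      m ∈ p '' (({u, v} : Set (Fin n)) ∩ {g, h}) := by
    intro g h hgh m hm hm'
    rcases hfe g h hgh m hm hm' with rfl | rfl
    · exact ⟨u, ⟨by simp, by simpa using hvert g h u hgh hm'⟩, rfl⟩
    · exact ⟨v, ⟨by simp, by simpa using hvert g h v hgh hm'⟩, rfl⟩
  refine ⟨hinj, ?_, ?_⟩
  · intro x y w h hw
    rcases adj_cases h with h | ⟨rfl, rfl⟩ | ⟨rfl, rfl⟩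
    · exact hvert x y w h hw
    · exact hfv w hw
    · exact (hfv w (segment_symm ℝ (p x) (p y) ▸ hw)).symm
  · rintro x y g h hxy hgh hne m ⟨hm, hm'⟩
    rcases adj_cases hxy with hxy' | hxy' <;> rcases adj_cases hgh with hgh' | hgh'
    · exact hedge x y g h hxy' hgh' hne ⟨hm, hm'⟩
    · rcases hgh' with ⟨rfl, rfl⟩ | ⟨rfl, rfl⟩
      · rw [Set.inter_comm]
        exact key x y hxy' m hm' hm
      · rw [Set.inter_comm, Set.pair_comm g h]
        exact key x y hxy' m (segment_symm ℝ (p g) (p h) ▸ hm') hm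
    · rcases hxy' with ⟨rfl, rfl⟩ | ⟨rfl, rfl⟩
      · exact key g h hgh' m hm hm'
      · rw [Set.pair_comm x y]
        exact key g h hgh' m (segment_symm ℝ (p x) (p y) ▸ hm) hm'
    · rcases hxy' with ⟨rfl, rfl⟩ | ⟨rfl, rfl⟩ <;> rcases hgh' with ⟨rfl, rfl⟩ | ⟨rfl, rfl⟩
      · exact absurd rfl hne
      · exact absurd (Set.pair_comm _ _) hne
      · exact absurd (Set.pair_comm _ _) hne
      · exact absurd rfl hne

/-- In a drawing of a triangulation, every free segment joins adjacent vertices. -/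
theorem IsTriangulation.adj_of_isFreeSegment {n : ℕ} {G : SimpleGraph (Fin n)}
    (hG : IsTriangulation G) {p : Fin n → Plane} (hp : IsPlanarEmbedding G p) {u v : Fin n}
    (huv : u ≠ v) (hf : IsFreeSegment G p u v) : G.Adj u v := by
  by_contra h
  exact hG.2 u v huv h ⟨p, hp.sup_edge hf⟩

/-- Postcomposition with an injective map that is straight on every edge preserves plane
drawings. -/
theorem IsPlanarEmbedding.comp {n : ℕ} {G : SimpleGraph (Fin n)} {p : Fin n → Plane}
    (hp : IsPlanarEmbedding G p) {T : Plane → Plane} (hT : Function.Injective T)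
    (hseg : ∀ u v, G.Adj u v →
      segment ℝ (T (p u)) (T (p v)) ⊆ T '' segment ℝ (p u) (p v)) :
    IsPlanarEmbedding G (T ∘ p) := by
  obtain ⟨hinj, hvert, hedge⟩ := hp
  refine ⟨hT.comp hinj, ?_, ?_⟩
  · intro u v w h hw
    obtain ⟨m, hm, hmw⟩ := hseg u v h hw
    exact hvert u v w h (hT hmw ▸ hm)
  · rintro u v x y huv hxy hne m ⟨hm, hm'⟩
    obtain ⟨r, hr, rfl⟩ := hseg u v huv hm
    obtain ⟨r', hr', hrr⟩ := hseg x y hxy hm'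
    obtain ⟨w, hw, rfl⟩ := hedge u v x y huv hxy hne ⟨hr, hT hrr ▸ hr'⟩
    exact ⟨w, hw, rfl⟩

/-- Two vectors of the plane are either parallel or define a coordinate system. -/
theorem parallel_or_exists_coords {s₁ s₂ : Plane} (h : s₁ ≠ 0) :
    (∃ k : ℝ, s₂ = k • s₁) ∨
    ∃ a b : Plane →ₗ[ℝ] ℝ, (∀ r, r = a r • s₁ + b r • s₂) ∧
      a s₁ = 1 ∧ b s₁ = 0 ∧ a s₂ = 0 ∧ b s₂ = 1 := by
  by_cases hli : LinearIndependent ℝ ![s₁, s₂]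
  · right
    let B := basisOfLinearIndependentOfCardEqFinrank hli (by simp)
    have hB : ⇑B = ![s₁, s₂] := coe_basisOfLinearIndependentOfCardEqFinrank hli (by simp)
    have h0 : B 0 = s₁ := by simp [hB]
    have h1 : B 1 = s₂ := by simp [hB]
    refine ⟨B.coord 0, B.coord 1, fun r => ?_, ?_, ?_, ?_, ?_⟩
    · have hr := B.sum_repr r
      rw [Fin.sum_univ_two, h0, h1] at hr
      exact hr.symm
    all_goals first | rw [← h0] | rw [← h1]
    all_goals simp
  · left
    rw [LinearIndependent.pair_iff' h] at hli
    push Not at hli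
    obtain ⟨k, hk⟩ := hli
    exact ⟨k, hk.symm⟩

/-- A finite set of points in an open half plane has a point that is first seen when a ray rotates
about the origin, nearest to the origin among such. -/
theorem exists_extremal_ratio {ι : Type*} [Finite ι] {S : Set ι} (hS : S.Nonempty)
    (f g : ι → ℝ) (hg : ∀ s ∈ S, 0 < g s) :
    ∃ x ∈ S, ∃ κ : ℝ, f x = κ * g x ∧
      ∀ s ∈ S, κ * g s ≤ f s ∧ (f s = κ * g s → g x ≤ g s) := by
  obtain ⟨x, hx, hmin⟩ := S.toFinite.exists_minimalFor
    (fun s => toLex (f s / g s, g s)) S hS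
  refine ⟨x, hx, f x / g x, by field_simp [(hg x hx).ne'], fun s hs => ?_⟩
  have h : toLex (f x / g x, g x) ≤ toLex (f s / g s, g s) := by
    rcases le_total (toLex (f x / g x, g x)) (toLex (f s / g s, g s)) with h | h
    · exact h
    · exact hmin hs h
  rw [Prod.Lex.toLex_le_toLex] at h
  have hgs := hg s hs
  refine ⟨?_, fun he => ?_⟩
  · rw [← le_div_iff₀ hgs]
    rcases h with h | h
    · exact h.le
    · exact h.1.le
  · rcases h with h | h
    · simp only [] at h
      rw [he, mul_div_assoc, div_self hgs.ne', mul_one] at h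
      exact absurd h (lt_irrefl _)
    · exact h.2

/-- The set of positive vectors of a linear order on the plane. -/
structure IsPositiveCone (P : Plane → Prop) : Prop where
  zero : ¬ P 0
  add : ∀ x y, P x → P y → P (x + y)
  smul : ∀ (c : ℝ) x, 0 < c → P x → P (c • x)
  total : ∀ x, x ≠ 0 → P x ∨ P (-x)

theorem IsPositiveCone.of_smul {P : Plane → Prop} (hP : IsPositiveCone P) {c : ℝ} {x : Plane}
    (hc : 0 < c) (h : P (c • x)) : P x := by
  have := hP.smul c⁻¹ _ (inv_pos.2 hc) h
  rwa [inv_smul_smul₀ hc.ne'] at this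

theorem IsPositiveCone.combo {P : Plane → Prop} (hP : IsPositiveCone P) {a b : ℝ} {x y : Plane}
    (ha : 0 ≤ a) (hb : 0 ≤ b) (hab : 0 < a + b) (hx : P x) (hy : P y) :
    P (a • x + b • y) := by
  rcases ha.eq_or_lt with rfl | ha
  · rw [zero_smul, zero_add]
    exact hP.smul _ _ (by linarith) hy
  rcases hb.eq_or_lt with rfl | hb
  · rw [zero_smul, add_zero]
    exact hP.smul _ _ ha hx
  exact hP.add _ _ (hP.smul _ _ ha hx) (hP.smul _ _ hb hy)

/-- A convex combination is positive only if one of the terms is. -/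
theorem IsPositiveCone.of_combo {P : Plane → Prop} (hP : IsPositiveCone P) {a b : ℝ} {x y : Plane}
    (ha : 0 ≤ a) (hb : 0 ≤ b) (h : P (a • x + b • y)) : P x ∨ P y := by
  by_contra! hxy
  have hab : 0 < a + b := by
    rcases (add_nonneg ha hb).eq_or_lt with h0 | h0
    · have ha0 : a = 0 := by linarith
      have hb0 : b = 0 := by linarith
      subst ha0 hb0
      simp only [zero_smul, add_zero] at h
      exact absurd h hP.zero
    · exact h0
  have neg_or : ∀ z, ¬ P z → z = 0 ∨ P (-z) := fun z hz => by
    by_cases h0 : z = 0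
    · exact Or.inl h0
    · exact Or.inr ((hP.total z h0).resolve_left hz)
  have not_both : ∀ z, P z → ¬ P (-z) := fun z h1 h2 => hP.zero (by
    simpa using hP.add _ _ h1 h2)
  have apos : ∀ {c : ℝ} {z : Plane}, 0 ≤ c → P (c • z) → P z := fun {c z} hc hz => by
    rcases hc.eq_or_lt with rfl | hc
    · rw [zero_smul] at hz
      exact absurd hz hP.zero
    · exact hP.of_smul hc hz
  rcases neg_or x hxy.1 with rfl | hx
  · rw [smul_zero, zero_add] at h
    exact hxy.2 (apos hb h)
  rcases neg_or y hxy.2 with rfl | hy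
  · rw [smul_zero, add_zero] at h
    exact hxy.1 (apos ha h)
  refine not_both _ h ?_
  have := hP.combo ha hb hab hx hy
  rwa [smul_neg, smul_neg, ← neg_add] at this

/-- The lexicographic order given by a coordinate system. -/
theorem isPositiveCone_lex {U V : Plane →ₗ[ℝ] ℝ} (h : ∀ z, U z = 0 → V z = 0 → z = 0) :
    IsPositiveCone fun z => 0 < V z ∨ (V z = 0 ∧ 0 < U z) where
  zero := by simp
  add := by
    intro x y hx hy
    simp only [map_add]
    rcases hx with hx | hx <;> rcases hy with hy | hy
    · left; linarith
    · left; linarith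
    · left; linarith
    · right; constructor <;> linarith
  smul := by
    intro c x hc hx
    simp only [map_smul, smul_eq_mul]
    rcases hx with hx | hx
    · left; positivity
    · right; exact ⟨by simp [hx.1], mul_pos hc hx.2⟩
  total := by
    intro x hx
    simp only [map_neg]
    rcases lt_trichotomy (V x) 0 with hV | hV | hV
    · right; left; linarith
    · rcases lt_trichotomy (U x) 0 with hU | hU | hU
      · right; right; constructor <;> linarith
      · exact absurd (h x hU hV) hx
      · left; right; exact ⟨hV, hU⟩
    · left; left; exact hV

/-- A segment leaving a triangle from a point of one side, towards the opposite side of the line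
through it, leaves through one of the two other sides. Coordinates are barycentric. -/
theorem exists_exit_triangle {α₀ β₀ a b : ℝ} (hα : 0 ≤ α₀) (hβ : 0 < β₀) (hl : α₀ + β₀ < 1)
    (hc : 0 < β₀ * a - α₀ * b) (hout : ¬ (0 ≤ b ∧ a + b ≤ 1)) :
    ∃ t : ℝ, 0 < t ∧ t ≤ 1 ∧ 0 ≤ (1 - t) * α₀ + t * a ∧
      (((1 - t) * β₀ + t * b = 0 ∧ (1 - t) * α₀ + t * a ≤ 1) ∨
       (0 ≤ (1 - t) * β₀ + t * b ∧ ((1 - t) * α₀ + t * a) + ((1 - t) * β₀ + t * b) = 1)) := by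
  have nonneg : ∀ t, 0 ≤ t → 0 ≤ (1 - t) * β₀ + t * b → 0 ≤ (1 - t) * α₀ + t * a := by
    intro t ht h
    have h1 : β₀ * ((1 - t) * α₀ + t * a) =
      α₀ * ((1 - t) * β₀ + t * b) + t * (β₀ * a - α₀ * b) := by ring
    have h2 : 0 ≤ β₀ * ((1 - t) * α₀ + t * a) := by rw [h1]; positivity
    exact nonneg_of_mul_nonneg_right h2 hβ
  have exit_base : b < 0 → (∀ t : ℝ, t = β₀ / (β₀ - b) →
      ((1 - t) * α₀ + t * a) + ((1 - t) * β₀ + t * b) ≤ 1) → ∃ t : ℝ, 0 < t ∧ t ≤ 1 ∧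
      0 ≤ (1 - t) * α₀ + t * a ∧
      (((1 - t) * β₀ + t * b = 0 ∧ (1 - t) * α₀ + t * a ≤ 1) ∨
       (0 ≤ (1 - t) * β₀ + t * b ∧
        ((1 - t) * α₀ + t * a) + ((1 - t) * β₀ + t * b) = 1)) := by
    intro hb hle
    have hd : 0 < β₀ - b := by linarith
    have h0 : (1 - β₀ / (β₀ - b)) * β₀ + β₀ / (β₀ - b) * b = 0 := by
      field_simp
      ring
    have hpos : 0 < β₀ / (β₀ - b) := by positivity
    refine ⟨β₀ / (β₀ - b), hpos, (div_le_one hd).2 (by linarith),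
      nonneg _ hpos.le h0.ge, Or.inl ⟨h0, ?_⟩⟩
    have := hle _ rfl
    linarith
  by_cases hs : a + b ≤ 1
  · have hb : b < 0 := by
      by_contra! h
      exact hout ⟨h, hs⟩
    refine exit_base hb fun t ht => ?_
    have hd : 0 < β₀ - b := by linarith
    have ht0 : 0 ≤ t := by rw [ht]; positivity
    have ht1 : t ≤ 1 := by rw [ht]; exact (div_le_one hd).2 (by linarith)
    nlinarith
  · push Not at hs
    have hd : 0 < a + b - (α₀ + β₀) := by linarith
    set t := (1 - (α₀ + β₀)) / (a + b - (α₀ + β₀)) with ht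
    have ht0 : 0 < t := div_pos (by linarith) hd
    have ht1 : t ≤ 1 := (div_le_one hd).2 (by linarith)
    have hsum : ((1 - t) * α₀ + t * a) + ((1 - t) * β₀ + t * b) = 1 := by
      have : t * (a + b - (α₀ + β₀)) = 1 - (α₀ + β₀) := div_mul_cancel₀ _ hd.ne'
      linarith
    by_cases hb : 0 ≤ (1 - t) * β₀ + t * b
    · exact ⟨t, ht0, ht1, nonneg t ht0.le hb, Or.inr ⟨hb, hsum⟩⟩
    · push Not at hb
      have hb' : b < 0 := by
        by_contra! h
        nlinarith [mul_nonneg (sub_nonneg.2 ht1) hβ.le, mul_nonneg ht0.le h]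
      refine exit_base hb' fun t' ht' => ?_
      have hd' : 0 < β₀ - b := by linarith
      have h1 : t' * (β₀ - b) = β₀ := by rw [ht']; exact div_mul_cancel₀ _ hd'.ne'
      have hlt : t' < t := by
        have : t' * (β₀ - b) < t * (β₀ - b) := by linarith
        exact lt_of_mul_lt_mul_right this hd'.le
      have h2 : t' * (a + b - (α₀ + β₀)) ≤ t * (a + b - (α₀ + β₀)) :=
        mul_le_mul_of_nonneg_right hlt.le hd.le
      linarith

/-- In a drawing of a triangulation, every vertex that is not the highest one has a higher
neighbour. -/
theorem IsTriangulation.exists_adj_pos {n : ℕ} {G : SimpleGraph (Fin n)}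
    (hG : IsTriangulation G) {p : Fin n → Plane} (hp : IsPlanarEmbedding G p)
    {P : Plane → Prop} (hP : IsPositiveCone P) {z w₀ : Fin n} (hw₀ : P (p w₀ - p z)) :
    ∃ w, G.Adj z w ∧ P (p w - p z) := by
  by_contra! hdown
  obtain ⟨hinj, hvert, hedge⟩ := id hp
  let B : Set Plane := ⋃ e ∈ {e : Fin n × Fin n | (G.Adj e.1 e.2 ∨ e.1 = e.2) ∧ e.1 ≠ z ∧ e.2 ≠ z},
    segment ℝ (p e.1) (p e.2)
  have hB : ∀ m, m ∈ B ↔ ∃ g h, (G.Adj g h ∨ g = h) ∧ g ≠ z ∧ h ≠ z ∧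
      m ∈ segment ℝ (p g) (p h) := by
    intro m
    simp only [B, Set.mem_iUnion, Set.mem_ofPred_eq, Prod.exists, exists_prop, and_assoc]
  have hBvert : ∀ w, w ≠ z → p w ∈ B := fun w hw =>
    (hB _).2 ⟨w, w, Or.inr rfl, hw, hw, by simp⟩
  have hBclosed : IsClosed B :=
    (Set.toFinite _).isClosed_biUnion fun e _ => by
      rw [← convexHull_pair]
      exact (Set.toFinite _).isClosed_convexHull ℝ
  have hzB : p z ∉ B := by
    rw [hB]
    rintro ⟨g, h, hgh | rfl, hg, hh, hm⟩
    · rcases hvert g h z hgh hm with rfl | rfl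
      · exact hg rfl
      · exact hh rfl
    · rw [segment_same] at hm
      exact hg (hinj hm).symm
  have visible : ∀ w, P (p w - p z) → ¬ ∀ m ∈ segment ℝ (p z) (p w), m ∈ B → m = p w := by
    intro w hw hfree
    have hwz : w ≠ z := by
      rintro rfl
      rw [sub_self] at hw
      exact hP.zero hw
    have hdir : ∀ m ∈ segment ℝ (p z) (p w), ∀ h, G.Adj z h → m ∈ segment ℝ (p z) (p h) →
        m = p z := by
      intro m hm h hzh hm'
      rw [segment_eq_image'] at hm hm'
      obtain ⟨t, ⟨ht0, -⟩, rfl⟩ := hm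
      obtain ⟨s, ⟨hs0, -⟩, hs⟩ := hm'
      simp only [add_right_inj] at hs
      rcases ht0.eq_or_lt with rfl | ht0
      · simp
      exfalso
      have h1 := hP.smul t _ ht0 hw
      rw [← hs] at h1
      rcases hs0.eq_or_lt with rfl | hs0
      · rw [zero_smul] at h1
        exact hP.zero h1
      · exact hdown h hzh (hP.of_smul hs0 h1)
    refine hdown w (hG.adj_of_isFreeSegment hp hwz.symm ⟨fun w' hw' => ?_, ?_⟩) hw
    · by_cases h : w' = z
      · exact Or.inl h
      · exact Or.inr (hinj (hfree _ hw' (hBvert w' h)))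
    · intro g h hgh m hm hm'
      by_cases hgz : g = z
      · subst hgz
        exact Or.inl (hdir m hm h hgh hm')
      by_cases hhz : h = z
      · subst hhz
        exact Or.inl (hdir m hm g hgh.symm (segment_symm ℝ (p g) (p h) ▸ hm'))
      exact Or.inr (hfree m hm ((hB m).2 ⟨g, h, Or.inl hgh, hgz, hhz, hm'⟩))
  have hw₀z : w₀ ≠ z := by
    rintro rfl
    rw [sub_self] at hw₀
    exact hP.zero hw₀
  -- the first obstacle on the way from `z` to `w₀`
  obtain ⟨q, hqP, hqB, hqfirst⟩ : ∃ q, P (q - p z) ∧ q ∈ B ∧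
      ∀ m ∈ segment ℝ (p z) q, m ∈ B → m = q := by
    let γ : ℝ → Plane := fun t => p z + t • (p w₀ - p z)
    have hγ : Continuous γ := by fun_prop
    have hcomp : IsCompact (Set.Icc (0 : ℝ) 1 ∩ γ ⁻¹' B) :=
      isCompact_Icc.inter_right (hBclosed.preimage hγ)
    obtain ⟨t, ⟨⟨ht0, ht1⟩, htB⟩, hmin⟩ := hcomp.exists_isLeast
      ⟨1, ⟨by simp, by simpa [γ] using hBvert w₀ hw₀z⟩⟩
    have htpos : 0 < t := by
      rcases ht0.eq_or_lt with rfl | h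
      · exact absurd (by simpa [γ] using htB) hzB
      · exact h
    refine ⟨γ t, ?_, htB, ?_⟩
    · simpa [γ] using hP.smul t _ htpos hw₀
    · intro m hm hmB
      rw [segment_eq_image'] at hm
      obtain ⟨s, ⟨hs0, hs1⟩, rfl⟩ := hm
      have hs : p z + s • (γ t - p z) = γ (s * t) := by simp [γ, smul_smul]
      simp only [hs] at hmB ⊢
      have h1 := hmin ⟨⟨by positivity, by nlinarith⟩, hmB⟩
      have h2 : s * t = t := by nlinarith
      rw [h2]
  have hqvert : ∀ w, q ≠ p w := by
    rintro w rfl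
    exact visible w hqP fun m hm hmB => hqfirst m hm hmB
  -- its edge, with an end above `z`
  obtain ⟨x, y, hxy, hxz, hyz, hyP, s, hs0, hs1, hqs⟩ : ∃ x y, G.Adj x y ∧ x ≠ z ∧ y ≠ z ∧
      P (p y - p z) ∧ ∃ s : ℝ, 0 < s ∧ s < 1 ∧ q = (1 - s) • p x + s • p y := by
    obtain ⟨g, h, hgh, hg, hh, hm⟩ := (hB q).1 hqB
    rcases hgh with hgh | rfl
    swap
    · rw [segment_same] at hm
      exact absurd hm (hqvert g)
    obtain ⟨a, b, ha, hb, hab, rfl⟩ := hm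
    have ha' : 0 < a := ha.lt_of_ne' fun h0 => hqvert h (by
      have : b = 1 := by linarith
      simp [h0, this])
    have hb' : 0 < b := hb.lt_of_ne' fun h0 => hqvert g (by
      have : a = 1 := by linarith
      simp [h0, this])
    have hrew : a • p g + b • p h - p z = a • (p g - p z) + b • (p h - p z) := by
      have : p z = (a + b) • p z := by rw [hab, one_smul]
      nth_rewrite 1 [this]
      module
    rw [hrew] at hqP
    rcases hP.of_combo ha hb hqP with h1 | h1
    · refine ⟨h, g, hgh.symm, hh, hg, h1, a, ha', by linarith, ?_⟩
      rw [← hab, add_sub_cancel_left, add_comm]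
    · refine ⟨g, h, hgh, hg, hh, h1, b, hb', by linarith, ?_⟩
      rw [← hab, add_sub_cancel_right]
  have hqz : q - p z ≠ 0 := fun h => hP.zero (h ▸ hqP)
  have mem_of_smul : ∀ (m r : Plane) (k : ℝ), 0 ≤ k → k ≤ 1 → m - p z = k • (r - p z) →
      m ∈ segment ℝ (p z) r := by
    intro m r k hk0 hk1 h
    rw [segment_eq_image']
    exact ⟨k, ⟨hk0, hk1⟩, by simp only [← h, add_sub_cancel]⟩
  have hxyB : ∀ m ∈ segment ℝ (p x) (p y), m ∈ B := fun m hm =>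
    (hB m).2 ⟨x, y, Or.inl hxy, hxz, hyz, hm⟩
  rcases parallel_or_exists_coords (s₂ := p y - p z) hqz with
    ⟨k, hk⟩ | ⟨a, b, hcoord, ha1, hb1, ha2, hb2⟩
  · -- the edge cannot point towards `z`
    have hk0 : 0 ≤ k := by
      by_contra! hk0
      have h1 := hP.smul (-k) _ (by linarith) hqP
      have h2 := hP.add _ _ h1 hyP
      rw [hk, ← add_smul, neg_add_cancel, zero_smul] at h2
      exact hP.zero h2
    rcases le_or_gt k 1 with hk1 | hk1
    · exact hqvert y (hqfirst _ (mem_of_smul _ _ k hk0 hk1 hk) (hBvert y hyz)).symm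
    have hx : p x - p z = ((1 - s * k) / (1 - s)) • (q - p z) := by
      have h1s : (1 - s) ≠ 0 := by linarith
      have h3 : (1 - s) • (p x - p z) = (1 - s * k) • (q - p z) := by
        have h4 : q - p z = (1 - s) • (p x - p z) + s • (p y - p z) := by
          rw [hqs]; module
        rw [hk] at h4
        have h5 : (1 - s) • (p x - p z) = (q - p z) - s • k • (q - p z) :=
          eq_sub_of_add_eq h4.symm
        rw [h5]
        module
      rw [div_eq_inv_mul, mul_smul, ← h3, inv_smul_smul₀ h1s]
    set j := (1 - s * k) / (1 - s) with hj
    have hj1 : j ≤ 1 := (div_le_one (by linarith)).2 (by nlinarith)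
    rcases le_or_gt 0 j with hj0 | hj0
    · exact hqvert x (hqfirst _ (mem_of_smul _ _ j hj0 hj1 hx) (hBvert x hxz)).symm
    · apply hzB
      apply hxyB
      have hkj : 0 < k - j := by linarith
      refine ⟨k / (k - j), -j / (k - j), by positivity, div_nonneg (by linarith) hkj.le, ?_, ?_⟩
      · field_simp
        ring
      · have ex : p x = p z + j • (q - p z) := by rw [← hx]; abel
        have ey : p y = p z + k • (q - p z) := by rw [← hk]; abel
        rw [ex, ey]
        have e1 : k / (k - j) + -j / (k - j) = 1 := by field_simp; ring
        have e2 : k / (k - j) * j + -j / (k - j) * k = 0 := by field_simp; ring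
        calc _ = (k / (k - j) + -j / (k - j)) • p z +
              (k / (k - j) * j + -j / (k - j) * k) • (q - p z) := by module
          _ = p z := by rw [e1, e2]; simp
  -- coordinates of vertices in the triangle spanned by `z`, `q`, `y`
  let A : Set (Fin n) := {w | w ≠ z ∧ 0 ≤ a (p w - p z) ∧ 0 ≤ b (p w - p z) ∧
    a (p w - p z) + b (p w - p z) ≤ 1}
  have eq_z : ∀ r, a (r - p z) = 0 → b (r - p z) = 0 → r = p z := by
    intro r h1 h2
    have := hcoord (r - p z)
    rw [h1, h2, zero_smul, zero_smul, add_zero] at this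
    exact sub_eq_zero.1 this
  have hApos : ∀ w ∈ A, 0 < a (p w - p z) + b (p w - p z) := by
    rintro w ⟨hwz, h1, h2, -⟩
    refine (add_nonneg h1 h2).lt_of_ne' fun h => hwz (hinj (eq_z _ ?_ ?_)) <;> linarith
  obtain ⟨w, hwA, κ, hwκ, hwmin⟩ := exists_extremal_ratio (S := A)
    ⟨y, hyz, ha2.ge, hb2.symm ▸ zero_le_one, by rw [ha2, hb2, zero_add]⟩
    (fun w => b (p w - p z)) (fun w => a (p w - p z) + b (p w - p z)) hApos
  obtain ⟨hwz, hwa, hwb, hwl⟩ := id hwA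
  have hwpos := hApos w hwA
  have hwP : P (p w - p z) := by
    rw [hcoord (p w - p z)]
    exact hP.combo hwa hwb hwpos hqP hyP
  have hwb' : 0 < b (p w - p z) := hwb.lt_of_ne' fun h => by
    refine hqvert w (hqfirst _ (mem_of_smul _ _ (a (p w - p z)) hwa (by linarith) ?_)
      (hBvert w hwz)).symm
    conv_lhs => rw [hcoord (p w - p z)]
    rw [h, zero_smul, add_zero]
  refine visible w hwP fun m hm hmB => ?_
  by_contra hmw
  obtain ⟨g, h, hgh, hgz, hhz, hmgh⟩ := (hB m).1 hmB
  obtain ⟨t, ht0, ht1, htm⟩ : ∃ t : ℝ, 0 < t ∧ t < 1 ∧ m - p z = t • (p w - p z) := by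
    rw [segment_eq_image'] at hm
    obtain ⟨t, ⟨ht0, ht1⟩, rfl⟩ := hm
    refine ⟨t, ht0.lt_of_ne' ?_, ht1.lt_of_ne ?_, by simp⟩
    · rintro rfl
      exact hzB (by simpa using hmB)
    · rintro rfl
      exact hmw (by simp)
  have hma : a (m - p z) = t * a (p w - p z) := by rw [htm, map_smul, smul_eq_mul]
  have hmb : b (m - p z) = t * b (p w - p z) := by rw [htm, map_smul, smul_eq_mul]
  have hα : 0 ≤ a (m - p z) := by rw [hma]; positivity
  have hβ : 0 < b (m - p z) := by rw [hmb]; positivity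
  have hl : a (m - p z) + b (m - p z) < a (p w - p z) + b (p w - p z) := by
    rw [hma, hmb, ← mul_add]
    nlinarith
  have hκ : b (m - p z) = κ * (a (m - p z) + b (m - p z)) := by
    rw [hma, hmb]
    linear_combination t * hwκ
  have hconv : ∀ (L : Plane →ₗ[ℝ] ℝ) (r₁ r₂ : Plane) (t : ℝ),
      L ((1 - t) • r₁ + t • r₂ - p z) = (1 - t) * L (r₁ - p z) + t * L (r₂ - p z) := by
    intro L r₁ r₂ t
    simp only [map_sub, map_add, map_smul, smul_eq_mul]
    ring
  have hqx : q ∈ segment ℝ (p x) (p y) := ⟨1 - s, s, by linarith, hs0.le, by ring, hqs.symm⟩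
  have hax : (1 - s) * a (p x - p z) = 1 := by
    have := hconv a (p x) (p y) s
    rw [← hqs, ha1, ha2] at this
    linarith
  have hbx : (1 - s) * b (p x - p z) = -s := by
    have := hconv b (p x) (p y) s
    rw [← hqs, hb1, hb2] at this
    linarith
  have hlx : a (p x - p z) + b (p x - p z) = 1 := by
    have h1 : (1 - s) * (a (p x - p z) + b (p x - p z)) = (1 - s) * 1 := by linarith
    exact mul_left_cancel₀ (by linarith) h1
  have hbx' : b (p x - p z) < 0 := by
    by_contra! h0
    have := mul_nonneg (sub_nonneg.2 hs1.le) h0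
    linarith
  have side : ∀ g h, (G.Adj g h ∨ g = h) → g ≠ z → h ≠ z → m ∈ segment ℝ (p g) (p h) →
      b (m - p z) * a (p g - p z) - a (m - p z) * b (p g - p z) ≤ 0 := by
    intro g h hgh hgz hhz hm
    by_contra! hc
    rcases hgh with hgh | rfl
    swap
    · rw [segment_same] at hm
      rw [← Set.mem_singleton_iff.1 hm] at hc
      linarith [mul_comm (a (m - p z)) (b (m - p z))]
    have hout : ¬ (0 ≤ b (p g - p z) ∧ a (p g - p z) + b (p g - p z) ≤ 1) := by
      rintro ⟨h0, h1⟩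
      have h2 : 0 < b (m - p z) * a (p g - p z) := by
        have := mul_nonneg hα h0
        linarith
      have hga : 0 < a (p g - p z) := pos_of_mul_pos_right h2 hβ.le
      have h3 := (hwmin g ⟨hgz, hga.le, h0, h1⟩).1
      have hS : 0 < a (m - p z) + b (m - p z) := by linarith
      have h4 := mul_le_mul_of_nonneg_right h3 hS.le
      have h5 : κ * (a (p g - p z) + b (p g - p z)) * (a (m - p z) + b (m - p z)) =
          b (m - p z) * (a (p g - p z) + b (p g - p z)) := by
        linear_combination -(a (p g - p z) + b (p g - p z)) * hκ
      rw [h5] at h4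
      linarith
    obtain ⟨t', ht0', ht1', hnn, hcase⟩ :=
      exists_exit_triangle hα hβ (by linarith) hc hout
    set m' := (1 - t') • m + t' • p g with hm'
    rw [← hconv a, ← hconv b, ← hm'] at hcase
    rw [← hconv a, ← hm'] at hnn
    have hm'gh : m' ∈ segment ℝ (p g) (p h) :=
      convex_segment _ _ hm (left_mem_segment ℝ _ _) (by linarith) ht0'.le (by ring)
    have hcm : 0 < b (m - p z) * a (m' - p z) - a (m - p z) * b (m' - p z) := by
      rw [hm', hconv a, hconv b]
      have := mul_pos ht0' hc
      linarith
    have hm'B : m' ∈ B := (hB _).2 ⟨g, h, Or.inl hgh, hgz, hhz, hm'gh⟩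
    have hm'co := hcoord (m' - p z)
    obtain ⟨hb0, hm'xy⟩ : 0 ≤ b (m' - p z) ∧ m' ∈ segment ℝ (p x) (p y) := by
      rcases hcase with ⟨h0, h1⟩ | ⟨h0, h1⟩
      · rw [h0, zero_smul, add_zero] at hm'co
        exact ⟨h0.ge, (hqfirst _ (mem_of_smul _ _ _ hnn h1 hm'co) hm'B).symm ▸ hqx⟩
      · refine ⟨h0, (convex_segment _ _).segment_subset hqx (right_mem_segment ℝ _ _)
          ⟨_, _, hnn, h0, h1, ?_⟩⟩
        have e : m' = p z + (m' - p z) := by abel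
        conv_rhs => rw [e, hm'co]
        have e1 : b (m' - p z) = 1 - a (m' - p z) := by linarith
        rw [e1]
        module
    by_cases hset : ({g, h} : Set (Fin n)) = {x, y}
    · have hone : ∀ r ∈ ({x, y} : Set (Fin n)), a (p r - p z) + b (p r - p z) = 1 := by
        rintro r (rfl | rfl)
        · exact hlx
        · rw [ha2, hb2, zero_add]
      have hg1 := hone g (hset ▸ by simp)
      have hh1 := hone h (hset ▸ by simp)
      obtain ⟨c₁, c₂, -, -, hc12, hmc⟩ := hm
      obtain rfl : c₁ = 1 - c₂ := by linarith
      have e1 := hconv a (p g) (p h) c₂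
      have e2 := hconv b (p g) (p h) c₂
      rw [hmc] at e1 e2
      have : a (m - p z) + b (m - p z) = 1 := by
        rw [e1, e2]
        linear_combination (1 - c₂) * hg1 + c₂ * hh1
      linarith
    · obtain ⟨w', ⟨-, hw'⟩, hw'm⟩ := hedge g h x y hgh hxy hset ⟨hm'gh, hm'xy⟩
      rw [← hw'm] at hcm hb0
      rcases hw' with rfl | rfl
      · linarith
      · rw [ha2, hb2] at hcm
        linarith
  have not_aligned : ∀ g h, (G.Adj g h ∨ g = h) → g ≠ z → h ≠ z → m ∈ segment ℝ (p g) (p h) →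
      b (m - p z) * a (p g - p z) - a (m - p z) * b (p g - p z) = 0 →
      b (m - p z) < b (p g - p z) := by
    intro g h hgh hgz hhz hm hc
    by_contra! hle
    have hS : 0 < a (m - p z) + b (m - p z) := by linarith
    rcases lt_or_ge 0 (b (p g - p z)) with h0 | h0
    · have hga : 0 ≤ a (p g - p z) := by
        have h2 : 0 ≤ b (m - p z) * a (p g - p z) := by
          have := mul_nonneg hα h0.le
          linarith
        exact nonneg_of_mul_nonneg_right h2 hβ
      have hgl : a (p g - p z) + b (p g - p z) ≤ a (m - p z) + b (m - p z) := by
        have h3 : b (m - p z) * (a (p g - p z) + b (p g - p z)) ≤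
            b (m - p z) * (a (m - p z) + b (m - p z)) := by
          have := mul_le_mul_of_nonneg_right hle hS.le
          linarith
        exact le_of_mul_le_mul_left h3 hβ
      have h4 := (hwmin g ⟨hgz, hga, h0.le, by linarith⟩).2 (by
        have : b (m - p z) * b (p g - p z) =
            b (m - p z) * (κ * (a (p g - p z) + b (p g - p z))) := by
          linear_combination b (p g - p z) * hκ - κ * hc
        exact mul_left_cancel₀ hβ.ne' this)
      linarith
    · set j := b (p g - p z) / b (m - p z) with hj
      have hj0 : j ≤ 0 := div_nonpos_of_nonpos_of_nonneg h0 hβ.le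
      have hbj : b (p g - p z) = j * b (m - p z) := (div_mul_cancel₀ _ hβ.ne').symm
      have haj : a (p g - p z) = j * a (m - p z) := by
        apply mul_left_cancel₀ hβ.ne'
        rw [hbj] at hc
        linarith
      have hgj : p g - p z = j • (m - p z) := by
        rw [hcoord (p g - p z), hbj, haj]
        conv_rhs => rw [hcoord (m - p z)]
        module
      apply hzB
      refine (hB _).2 ⟨g, h, hgh, hgz, hhz,
        (convex_segment _ _).segment_subset (left_mem_segment ℝ _ _) hm ?_⟩
      have hj1 : 0 < 1 - j := by linarith
      refine ⟨1 / (1 - j), -j / (1 - j), by positivity, div_nonneg (by linarith) hj1.le, ?_, ?_⟩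
      · field_simp
        ring
      · have eg : p g = p z + j • (m - p z) := by rw [← hgj]; abel
        rw [eg]
        have e1 : -j / (1 - j) = 1 - 1 / (1 - j) := by field_simp; ring
        have e2 : 1 / (1 - j) * j + -j / (1 - j) = 0 := by field_simp; ring
        calc _ = (1 / (1 - j)) • p z + (1 / (1 - j) * j + -j / (1 - j)) • m
              - (1 / (1 - j) * j) • p z := by module
          _ = (1 / (1 - j) - 1 / (1 - j) * j) • p z := by rw [e2]; module
          _ = p z := by
            rw [show 1 / (1 - j) - 1 / (1 - j) * j = 1 by field_simp, one_smul]
  have hg1 := side g h hgh hgz hhz hmgh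
  have hmhg : m ∈ segment ℝ (p h) (p g) := segment_symm ℝ (p g) (p h) ▸ hmgh
  have hhg : G.Adj h g ∨ h = g := hgh.imp SimpleGraph.Adj.symm Eq.symm
  have hh1 := side h g hhg hhz hgz hmhg
  have hg2 := not_aligned g h hgh hgz hhz hmgh
  have hh2 := not_aligned h g hhg hhz hgz hmhg
  obtain ⟨c₁, c₂, hc1, hc2, hc12, hmc⟩ := hmgh
  obtain rfl : c₁ = 1 - c₂ := by linarith
  have e1 := hconv a (p g) (p h) c₂
  have e2 := hconv b (p g) (p h) c₂
  rw [hmc] at e1 e2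
  set Cg := b (m - p z) * a (p g - p z) - a (m - p z) * b (p g - p z) with hCg
  set Ch := b (m - p z) * a (p h - p z) - a (m - p z) * b (p h - p z) with hCh
  have hC : (1 - c₂) * Cg + c₂ * Ch = 0 := by
    rw [hCg, hCh]
    linear_combination -b (m - p z) * e1 + a (m - p z) * e2
  have hCg0 : (1 - c₂) * Cg ≤ 0 := mul_nonpos_of_nonneg_of_nonpos hc1 hg1
  have hCh0 : c₂ * Ch ≤ 0 := mul_nonpos_of_nonneg_of_nonpos hc2 hh1
  rcases mul_eq_zero.1 (show (1 - c₂) * Cg = 0 by linarith) with h1 | h1 <;>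
    rcases mul_eq_zero.1 (show c₂ * Ch = 0 by linarith) with h2 | h2
  · linarith
  · have := hh2 h2
    rw [h1, show c₂ = 1 by linarith] at e2
    linarith
  · have := hg2 h1
    rw [h2] at e2
    linarith
  · have k1 := hg2 h1
    have k2 := hh2 h2
    have k3 : 0 ≤ (1 - c₂) * (b (p g - p z) - b (m - p z)) := mul_nonneg hc1 (by linarith)
    have k4 : 0 ≤ c₂ * (b (p h - p z) - b (m - p z)) := mul_nonneg hc2 (by linarith)
    have k5 : (1 - c₂) * (b (p g - p z) - b (m - p z)) = 0 := by linarith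
    have k6 : c₂ * (b (p h - p z) - b (m - p z)) = 0 := by linarith
    rcases mul_eq_zero.1 k5 with h | h
    · rw [show c₂ = 1 by linarith] at k6
      linarith
    · linarith

/-- A set of vertices closed under adjacency up to `d` and `e`, with a vertex higher than both
`d` and `e`, contains a highest vertex. -/
theorem IsTriangulation.exists_top {n : ℕ} {G : SimpleGraph (Fin n)}
    (hG : IsTriangulation G) {p : Fin n → Plane} (hp : IsPlanarEmbedding G p)
    {P : Plane → Prop} (hP : IsPositiveCone P) {d e : Fin n} {K : Set (Fin n)}
    (hK : ∀ x ∈ K, ∀ y, G.Adj x y → y ∈ K ∨ y = d ∨ y = e) {z : Fin n} (hz : z ∈ K)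
    (hd : P (p z - p d)) (he : P (p z - p e)) :
    ∃ t ∈ K, ∀ w, ¬ P (p w - p t) := by
  have htrans : ∀ x y w, P (p x - p y) → P (p y - p w) → P (p x - p w) := by
    intro x y w h1 h2
    simpa using hP.add _ _ h1 h2
  have : IsTrans (Fin n) fun x y => P (p x - p y) := ⟨htrans⟩
  have : Std.Irrefl fun x y : Fin n => P (p x - p y) :=
    ⟨fun x h => hP.zero (by simpa using h)⟩
  have hwf : WellFounded fun x y : Fin n => P (p x - p y) :=
    Finite.wellFounded_of_trans_of_irrefl _
  obtain ⟨t, ⟨htK, htd, hte⟩, hmin⟩ := hwf.has_min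
    {w | w ∈ K ∧ P (p w - p d) ∧ P (p w - p e)} ⟨z, hz, hd, he⟩
  refine ⟨t, htK, fun w hw => ?_⟩
  obtain ⟨y, hty, hy⟩ := hG.exists_adj_pos hp hP hw
  have hyd := htrans _ _ _ hy htd
  have hye := htrans _ _ _ hy hte
  rcases hK t htK y hty with h | rfl | rfl
  · exact hmin y ⟨h, hyd, hye⟩ hy
  · exact hP.zero (by simpa using hyd)
  · exact hP.zero (by simpa using hye)

/-- Closedness under adjacency up to `d` and `e` passes to the remaining vertices. -/
theorem closed_compl {n : ℕ} {G : SimpleGraph (Fin n)} {d e : Fin n} {K : Set (Fin n)}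
    (hK : ∀ x ∈ K, ∀ y, G.Adj x y → y ∈ K ∨ y = d ∨ y = e) :
    ∀ x ∈ {x | x ∉ K ∧ x ≠ d ∧ x ≠ e}, ∀ y, G.Adj x y →
      y ∈ {x | x ∉ K ∧ x ≠ d ∧ x ≠ e} ∨ y = d ∨ y = e := by
  rintro x ⟨hxK, hxd, hxe⟩ y hxy
  by_contra! h
  obtain ⟨h1, h2, h3⟩ := h
  have hy : y ∈ K := by
    by_contra hy
    exact h1 ⟨hy, h2, h3⟩
  rcases hK y hy x hxy.symm with h | h | h
  exacts [hxK h, hxd h, hxe h]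

/-- The vertices higher than `d` and `e` lie in one component of the graph without `d`, `e`. -/
theorem IsTriangulation.mem_of_pos {n : ℕ} {G : SimpleGraph (Fin n)}
    (hG : IsTriangulation G) {p : Fin n → Plane} (hp : IsPlanarEmbedding G p)
    {P : Plane → Prop} (hP : IsPositiveCone P) {d e : Fin n} {K : Set (Fin n)}
    (hK : ∀ x ∈ K, ∀ y, G.Adj x y → y ∈ K ∨ y = d ∨ y = e) {z z' : Fin n} (hz : z ∈ K)
    (hd : P (p z - p d)) (he : P (p z - p e)) (hd' : P (p z' - p d)) (he' : P (p z' - p e)) :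
    z' ∈ K := by
  by_contra hz'
  obtain ⟨t, ht, htop⟩ := hG.exists_top hp hP hK hz hd he
  have hz'd : z' ≠ d := by
    rintro rfl
    exact hP.zero (by simpa using hd')
  have hz'e : z' ≠ e := by
    rintro rfl
    exact hP.zero (by simpa using he')
  obtain ⟨t', ht', htop'⟩ := hG.exists_top hp hP (closed_compl hK) ⟨hz', hz'd, hz'e⟩ hd' he'
  have hne : p t - p t' ≠ 0 := fun h => ht'.1 (hp.1 (sub_eq_zero.1 h) ▸ ht)
  rcases hP.total _ hne with h | h
  · exact htop' t h
  · exact htop t' (by rwa [neg_sub] at h)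

/-- Of two vertex sets separated by the ends of an edge `d e`, one lies strictly on one side of
the line through the edge if the other has a vertex strictly on the other side. -/
theorem IsTriangulation.neg_of_separated {n : ℕ} {G : SimpleGraph (Fin n)}
    (hG : IsTriangulation G) {p : Fin n → Plane} (hp : IsPlanarEmbedding G p)
    {d e : Fin n} (hde : G.Adj d e) {K : Set (Fin n)}
    (hK : ∀ x ∈ K, ∀ y, G.Adj x y → y ∈ K ∨ y = d ∨ y = e)
    {U V : Plane →ₗ[ℝ] ℝ} (hUV : ∀ z, U z = 0 → V z = 0 → z = 0)
    (hU : U (p e - p d) = 1) (hV : V (p e - p d) = 0)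
    {z : Fin n} (hz : z ∈ K) (hzV : 0 < V (p z - p d)) {w : Fin n} (hwK : w ∉ K) (hwd : w ≠ d)
    (hwe : w ≠ e) : V (p w - p d) < 0 := by
  have hUe : ∀ x, U (p x - p e) = U (p x - p d) - 1 := fun x => by
    rw [← hU, ← map_sub, sub_sub_sub_cancel_right]
  have hVe : ∀ x, V (p x - p e) = V (p x - p d) := fun x => by
    rw [← sub_zero (V (p x - p d)), ← hV, ← map_sub, sub_sub_sub_cancel_right]
  have cone := isPositiveCone_lex hUV
  have cone' := isPositiveCone_lex (U := -U) (V := V) fun z h1 h2 =>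
    hUV z (neg_eq_zero.1 h1) h2
  have above := hG.mem_of_pos hp cone hK hz (Or.inl hzV) (Or.inl (by rwa [hVe])) (z' := w)
  have above' := hG.mem_of_pos hp cone' hK hz (Or.inl hzV) (Or.inl (by rwa [hVe])) (z' := w)
  simp only [hUe, hVe, LinearMap.neg_apply] at above above'
  by_contra! hw
  rcases hw.eq_or_lt with hw0 | hw0
  swap
  · exact hwK (above (Or.inl hw0) (Or.inl hw0))
  rcases lt_or_ge (U (p w - p d)) 0 with h0 | h0
  · exact hwK (above' (Or.inr ⟨hw0.symm, by linarith⟩) (Or.inr ⟨hw0.symm, by linarith⟩))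
  rcases lt_or_ge 1 (U (p w - p d)) with h1 | h1
  · exact hwK (above (Or.inr ⟨hw0.symm, by linarith⟩) (Or.inr ⟨hw0.symm, by linarith⟩))
  have hmem : p w ∈ segment ℝ (p d) (p e) := by
    rw [segment_eq_image']
    refine ⟨U (p w - p d), ⟨h0, h1⟩, ?_⟩
    have : p w - p d - U (p w - p d) • (p e - p d) = 0 := by
      apply hUV <;> rw [map_sub, map_smul, smul_eq_mul]
      · rw [hU]; ring
      · rw [hV, ← hw0]; ring
    simp only [← sub_eq_zero.1 this, add_sub_cancel]
  rcases hp.2.1 d e w hde hmem with h | h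
  exacts [hwd h, hwe h]

/-- Three mutually adjacent vertices are not collinear. -/
theorem IsPlanarEmbedding.not_parallel {n : ℕ} {G : SimpleGraph (Fin n)} {p : Fin n → Plane}
    (hp : IsPlanarEmbedding G p) {d e v : Fin n} (hde : G.Adj d e) (hvd : G.Adj v d)
    (hve : G.Adj v e) (k : ℝ) : p v - p d ≠ k • (p e - p d) := by
  intro hk
  have hv : p v = p d + k • (p e - p d) := by rw [← hk]; abel
  rcases lt_or_ge k 0 with h0 | h0
  · have hk1 : 0 < 1 - k := by linarith
    rcases hp.2.1 v e d hve ⟨1 / (1 - k), -k / (1 - k), by positivity,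
      div_nonneg (by linarith) hk1.le, by field_simp; ring, by
        rw [hv]
        have e1 : 1 / (1 - k) * k = -(-k / (1 - k)) := by field_simp
        have e2 : 1 / (1 - k) = 1 - (-k / (1 - k)) := by field_simp; ring
        rw [smul_add, smul_smul, e1, e2]
        module⟩ with h | h
    exacts [hvd.ne h.symm, hde.ne h]
  rcases le_or_gt k 1 with h1 | h1
  · rcases hp.2.1 d e v hde (by
      rw [segment_eq_image']
      exact ⟨k, ⟨h0, h1⟩, hv.symm⟩) with h | h
    exacts [hvd.ne h, hve.ne h]
  · have hk0 : 0 < k := by linarith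
    rcases hp.2.1 d v e hvd.symm (by
      rw [segment_eq_image']
      refine ⟨1 / k, ⟨by positivity, (div_le_one hk0).2 h1.le⟩, ?_⟩
      simp only [hk, smul_smul]
      rw [one_div_mul_cancel hk0.ne']
      simp) with h | h
    exacts [hde.ne h.symm, hve.ne h.symm]

/-- The ends of an edge of a triangle do not separate a triangulation. -/
theorem IsTriangulation.false_of_separated {n : ℕ} {G : SimpleGraph (Fin n)}
    (hG : IsTriangulation G) {d e v : Fin n} (hde : G.Adj d e) (hvd : G.Adj v d)
    (hve : G.Adj v e) {K : Set (Fin n)} (hne : K.Nonempty) (hdK : d ∉ K) (heK : e ∉ K)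
    (hvK : v ∉ K) (hK : ∀ x ∈ K, ∀ y, G.Adj x y → y ∈ K ∨ y = d ∨ y = e) : False := by
  obtain ⟨p, hp⟩ := id hG.1
  have hδ : p e - p d ≠ 0 := fun h => hde.ne (hp.1 (sub_eq_zero.1 h)).symm
  rcases parallel_or_exists_coords (s₂ := p v - p d) hδ with
    ⟨k, hk⟩ | ⟨U, V, hcoord, hU, hV, -, hvV⟩
  · exact hp.not_parallel hde hvd hve k hk
  have hUV : ∀ z, U z = 0 → V z = 0 → z = 0 := fun z h1 h2 => by
    rw [hcoord z, h1, h2]; simp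
  set L : Set (Fin n) := {x | x ∉ K ∧ x ≠ d ∧ x ≠ e}
  have hLclosed := closed_compl hK
  have hvL : v ∈ L := ⟨hvK, hvd.ne, hve.ne⟩
  have hKneg : ∀ x ∈ K, V (p x - p d) < 0 := fun x hx =>
    hG.neg_of_separated hp hde hLclosed hUV hU hV hvL (hvV ▸ one_pos)
      (fun h => h.1 hx) (fun h => hdK (h ▸ hx)) (fun h => heK (h ▸ hx))
  have hLpos : ∀ x ∈ L, 0 < V (p x - p d) := by
    rintro x ⟨hx, hxd, hxe⟩
    obtain ⟨k, hk⟩ := hne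
    have := hG.neg_of_separated hp hde hK (U := U) (V := -V)
      (fun z h1 h2 => hUV z h1 (neg_eq_zero.1 h2)) hU (by simp [hV]) hk
      (by simpa using hKneg k hk) hx hxd hxe
    simpa using this
  obtain ⟨x, hxK, κ₁, hx1, hx2⟩ := exists_extremal_ratio hne
    (fun x => U (p x - p d) + 1) (fun x => -V (p x - p d)) fun x hx => neg_pos.2 (hKneg x hx)
  obtain ⟨y, hyL, κ₂, hy1, hy2⟩ := exists_extremal_ratio ⟨v, hvL⟩
    (fun x => U (p x - p d) + 1) (fun x => V (p x - p d)) hLpos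
  -- shear the upper half plane
  let T : Plane → Plane := fun z =>
    z + (-(κ₁ + κ₂) * max (V (z - p d)) 0) • (p e - p d)
  have hTV : ∀ z, V (T z - p d) = V (z - p d) := fun z => by
    simp only [T, map_sub, map_add, map_smul, smul_eq_mul]
    rw [map_sub] at hV
    rw [hV]; ring
  have hTU : ∀ z, U (T z - p d) = U (z - p d) - (κ₁ + κ₂) * max (V (z - p d)) 0 := fun z => by
    simp only [T, map_sub, map_add, map_smul, smul_eq_mul]
    rw [map_sub] at hU
    rw [hU]; ring
  have hTinj : Function.Injective T := by
    intro z z' h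
    have h1 : V (z - p d) = V (z' - p d) := by rw [← hTV z, ← hTV z', h]
    simp only [T, h1, add_left_inj] at h
    exact h
  have V_combo : ∀ (s t : ℝ) (z z' : Plane), s + t = 1 →
      V (s • z + t • z' - p d) = s * V (z - p d) + t * V (z' - p d) := by
    intro s t z z' hst
    simp only [map_sub, map_add, map_smul, smul_eq_mul]
    linear_combination (V (p d)) * hst
  have hTcombo : ∀ z z', ((0 ≤ V (z - p d) ∧ 0 ≤ V (z' - p d)) ∨
      (V (z - p d) ≤ 0 ∧ V (z' - p d) ≤ 0)) →
      segment ℝ (T z) (T z') ⊆ T '' segment ℝ z z' := by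
    rintro z z' h m ⟨s, t, hs, ht, hst, rfl⟩
    refine ⟨s • z + t • z', ⟨s, t, hs, ht, hst, rfl⟩, ?_⟩
    have hmax : max (V (s • z + t • z' - p d)) 0 =
        s * max (V (z - p d)) 0 + t * max (V (z' - p d)) 0 := by
      rw [V_combo s t z z' hst]
      rcases h with ⟨h1, h2⟩ | ⟨h1, h2⟩
      · rw [max_eq_left h1, max_eq_left h2, max_eq_left (by positivity)]
      · rw [max_eq_right h1, max_eq_right h2, max_eq_right, mul_zero, mul_zero, add_zero]
        exact add_nonpos (mul_nonpos_of_nonneg_of_nonpos hs h1)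
          (mul_nonpos_of_nonneg_of_nonpos ht h2)
    simp only [T, hmax]
    module
  have hVd : V (p d - p d) = 0 := by simp
  have vertex_cases : ∀ w, w ∈ K ∨ w ∈ L ∨ w = d ∨ w = e := by
    intro w
    by_cases h1 : w ∈ K
    · exact Or.inl h1
    by_cases h2 : w = d
    · exact Or.inr (Or.inr (Or.inl h2))
    by_cases h3 : w = e
    · exact Or.inr (Or.inr (Or.inr h3))
    exact Or.inr (Or.inl ⟨h1, h2, h3⟩)
  have hq : IsPlanarEmbedding G (T ∘ p) := by
    refine hp.comp hTinj fun g h hgh => hTcombo _ _ ?_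
    rcases vertex_cases g with hg | hg | rfl | rfl
    · right
      refine ⟨(hKneg g hg).le, ?_⟩
      rcases hK g hg h hgh with hh | rfl | rfl
      exacts [(hKneg h hh).le, hVd.le, hV.le]
    · left
      refine ⟨(hLpos g hg).le, ?_⟩
      rcases hLclosed g hg h hgh with hh | rfl | rfl
      exacts [(hLpos h hh).le, hVd.ge, hV.ge]
    · rcases vertex_cases h with hh | hh | rfl | rfl
      exacts [Or.inr ⟨hVd.le, (hKneg h hh).le⟩, Or.inl ⟨hVd.ge, (hLpos h hh).le⟩,
        Or.inl ⟨hVd.ge, hVd.ge⟩, Or.inl ⟨hVd.ge, hV.ge⟩]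
    · rcases vertex_cases h with hh | hh | rfl | rfl
      exacts [Or.inr ⟨hV.le, (hKneg h hh).le⟩, Or.inl ⟨hV.ge, (hLpos h hh).le⟩,
        Or.inl ⟨hV.ge, hVd.ge⟩, Or.inl ⟨hV.ge, hV.ge⟩]
  -- the new edge runs along the line `φ = 0`
  let φ : Plane → ℝ := fun z => U (z - p d) + 1 + κ₁ * V (z - p d)
  have φ_combo : ∀ (s t : ℝ) (z z' : Plane), s + t = 1 →
      φ (s • z + t • z') = s * φ z + t * φ z' := by
    intro s t z z' hst
    simp only [φ, map_sub, map_add, map_smul, smul_eq_mul]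
    linear_combination (U (p d) + κ₁ * V (p d) - 1) * hst
  have eq_of : ∀ z z', φ z = 0 → φ z' = 0 → V (z - p d) = V (z' - p d) → z = z' := by
    intro z z' h1 h2 h3
    have h4 : U (z - p d) = U (z' - p d) := by
      simp only [φ] at h1 h2
      rw [h3] at h1
      linarith
    have := hUV (z - z')
      (by rw [← sub_sub_sub_cancel_right z z' (p d), map_sub, h4, sub_self])
      (by rw [← sub_sub_sub_cancel_right z z' (p d), map_sub, h3, sub_self])
    exact sub_eq_zero.1 this
  have φK : ∀ w ∈ K, φ (T (p w)) = U (p w - p d) + 1 + κ₁ * V (p w - p d) := by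
    intro w hw
    simp only [φ, hTU, hTV, max_eq_right (hKneg w hw).le]
    ring
  have φL : ∀ w ∈ L, φ (T (p w)) = U (p w - p d) + 1 - κ₂ * V (p w - p d) := by
    intro w hw
    simp only [φ, hTU, hTV, max_eq_left (hLpos w hw).le]
    ring
  have φd : φ (T (p d)) = 1 := by simp only [φ, hTU, hTV, hVd]; simp
  have φe : φ (T (p e)) = 2 := by
    simp only [φ, hTU, hTV, hU, hV]
    norm_num
  have φx : φ (T (p x)) = 0 := by rw [φK x hxK]; linarith
  have φy : φ (T (p y)) = 0 := by rw [φL y hyL]; linarith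
  have φnonneg : ∀ w, 0 ≤ φ (T (p w)) := by
    intro w
    rcases vertex_cases w with hw | hw | rfl | rfl
    · rw [φK w hw]; linarith [(hx2 w hw).1]
    · rw [φL w hw]; linarith [(hy2 w hw).1]
    · rw [φd]; norm_num
    · rw [φe]; norm_num
  have φzero : ∀ w, φ (T (p w)) = 0 → (w ∈ K ∧ V (T (p w) - p d) ≤ V (T (p x) - p d)) ∨
      (w ∈ L ∧ V (T (p y) - p d) ≤ V (T (p w) - p d)) := by
    intro w h0
    simp only [hTV]
    rcases vertex_cases w with hw | hw | rfl | rfl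
    · rw [φK w hw] at h0
      exact Or.inl ⟨hw, by linarith [(hx2 w hw).2 (by linarith)]⟩
    · rw [φL w hw] at h0
      exact Or.inr ⟨hw, by linarith [(hy2 w hw).2 (by linarith)]⟩
    · rw [φd] at h0; norm_num at h0
    · rw [φe] at h0; norm_num at h0
  have hVxy : V (T (p x) - p d) ≤ V (T (p y) - p d) := by
    simp only [hTV]
    linarith [hKneg x hxK, hLpos y hyL]
  have on_new : ∀ m ∈ segment ℝ (T (p x)) (T (p y)), φ m = 0 ∧
      V (T (p x) - p d) ≤ V (m - p d) ∧ V (m - p d) ≤ V (T (p y) - p d) := by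
    rintro m ⟨s, t, hs, ht, hst, rfl⟩
    obtain rfl : s = 1 - t := by linarith
    rw [φ_combo _ _ _ _ hst, V_combo _ _ _ _ hst, φx, φy]
    refine ⟨by ring, ?_, ?_⟩
    · nlinarith
    · nlinarith
  have vert : ∀ w, T (p w) ∈ segment ℝ (T (p x)) (T (p y)) → w = x ∨ w = y := by
    intro w hw
    obtain ⟨h0, h1, h2⟩ := on_new _ hw
    rcases φzero w h0 with ⟨-, h3⟩ | ⟨-, h3⟩
    · exact Or.inl (hq.1 (eq_of _ _ h0 φx (le_antisymm h3 h1)))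
    · exact Or.inr (hq.1 (eq_of _ _ h0 φy (le_antisymm h2 h3)))
  have hxy : ¬ G.Adj x y := by
    intro h
    rcases hK x hxK y h with h | h | h
    exacts [hyL.1 h, hyL.2.1 h, hyL.2.2 h]
  have hxyne : x ≠ y := fun h => hyL.1 (h ▸ hxK)
  refine hxy (hG.adj_of_isFreeSegment hq hxyne ⟨vert, ?_⟩)
  intro g h hgh m hm hm'
  obtain ⟨h0, h1, h2⟩ := on_new m hm
  obtain ⟨s, t, hs, ht, hst, hmst⟩ := hm'
  simp only [Function.comp_apply] at hmst hm ⊢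
  have hφm := φ_combo s t (T (p g)) (T (p h)) hst
  have hVm := V_combo s t (T (p g)) (T (p h)) hst
  rw [hmst] at hφm hVm
  have hsg := mul_nonneg hs (φnonneg g)
  have hth := mul_nonneg ht (φnonneg h)
  rcases hs.eq_or_lt with hs0 | hs0
  · have hmh : m = T (p h) := by
      rw [← hmst, ← hs0, show t = 1 by linarith]; simp
    rcases vert h (hmh ▸ hm) with rfl | rfl
    exacts [Or.inl hmh, Or.inr hmh]
  rcases ht.eq_or_lt with ht0 | ht0
  · have hmg : m = T (p g) := by
      rw [← hmst, ← ht0, show s = 1 by linarith]; simp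
    rcases vert g (hmg ▸ hm) with rfl | rfl
    exacts [Or.inl hmg, Or.inr hmg]
  have hg0 : φ (T (p g)) = 0 :=
    (mul_eq_zero.1 (show s * φ (T (p g)) = 0 by linarith)).resolve_left hs0.ne'
  have hh0 : φ (T (p h)) = 0 :=
    (mul_eq_zero.1 (show t * φ (T (p h)) = 0 by linarith)).resolve_left ht0.ne'
  obtain rfl : s = 1 - t := by linarith
  rcases φzero g hg0 with ⟨hg, hgV⟩ | ⟨hg, hgV⟩ <;> rcases φzero h hh0 with ⟨hh, hhV⟩ | ⟨hh, hhV⟩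
  · left
    refine eq_of _ _ h0 φx (le_antisymm ?_ h1)
    rw [hVm]
    nlinarith
  · rcases hK g hg h hgh with h | h | h
    exacts [absurd h hh.1, absurd h hh.2.1, absurd h hh.2.2]
  · rcases hK h hh g hgh.symm with h | h | h
    exacts [absurd h hg.1, absurd h hg.2.1, absurd h hg.2.2]
  · right
    refine eq_of _ _ h0 φy (le_antisymm h2 ?_)
    rw [hVm]
    nlinarith

/-- Every vertex of a triangle has a neighbour in every side of the triangle. -/
theorem IsTriangulation.exists_adj_mem_side {n : ℕ} {G : SimpleGraph (Fin n)}
    (hG : IsTriangulation G) {v d e : Fin n} (hvd : G.Adj v d) (hve : G.Adj v e)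
    (hde : G.Adj d e) {K : Set (Fin n)} (hne : K.Nonempty) (hvK : v ∉ K) (hdK : d ∉ K)
    (heK : e ∉ K) (hK : ∀ x ∈ K, ∀ y, G.Adj x y → y ∈ K ∨ y = v ∨ y = d ∨ y = e) :
    ∃ u ∈ K, G.Adj v u := by
  by_contra! h
  refine hG.false_of_separated hde hvd hve hne hdK heK hvK fun x hx y hxy => ?_
  rcases hK x hx y hxy with h1 | rfl | h1
  · exact Or.inl h1
  · exact absurd hxy.symm (h x hx)
  · exact Or.inr h1

/-- An edge on a separating triangle, with the third vertex singled out. -/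
theorem exists_third_vertex {n : ℕ} {G : SimpleGraph (Fin n)} {v u : Fin n}
    (h : ∃ x y z : Fin n, IsSepTriangle G x y z ∧
      s(v, u) ∈ ({s(x, y), s(y, z), s(x, z)} : Set (Sym2 (Fin n)))) :
    ∃ w, G.Adj v w ∧ G.Adj u w ∧
      ¬ (G.induce {t : Fin n | t ∉ ({v, u, w} : Set (Fin n))}).Connected := by
  obtain ⟨x, y, z, ⟨hxy, hyz, hxz, hsep⟩, hmem⟩ := h
  have aux : ∀ w, ({x, y, z} : Set (Fin n)) = {v, u, w} →
      ¬ (G.induce {t : Fin n | t ∉ ({v, u, w} : Set (Fin n))}).Connected := by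
    intro w hw
    rwa [← hw]
  simp only [Set.mem_insert_iff, Set.mem_singleton_iff, Sym2.eq_iff] at hmem
  rcases hmem with (⟨rfl, rfl⟩ | ⟨rfl, rfl⟩) | (⟨rfl, rfl⟩ | ⟨rfl, rfl⟩) | (⟨rfl, rfl⟩ | ⟨rfl, rfl⟩)
  · exact ⟨z, hxz, hyz, aux z rfl⟩
  · exact ⟨z, hyz, hxz, aux z (by ext; simp; tauto)⟩
  · exact ⟨x, hxy.symm, hxz.symm, aux x (by ext; simp; tauto)⟩
  · exact ⟨x, hxz.symm, hxy.symm, aux x (by ext; simp; tauto)⟩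
  · exact ⟨y, hxy, hyz.symm, aux y (by ext; simp; tauto)⟩
  · exact ⟨y, hyz.symm, hxy, aux y (by ext; simp; tauto)⟩

/-- A separating triangle on an edge from `v` into a side of the triangle `v d e` has a side that
is properly contained in the given one. -/
theorem IsTriangulation.exists_smaller_side {n : ℕ} {G : SimpleGraph (Fin n)}
    (hG : IsTriangulation G) {v d e : Fin n} (hvd : G.Adj v d) (hve : G.Adj v e)
    (hde : G.Adj d e) {I : Set (Fin n)} (hdI : d ∉ I) (heI : e ∉ I)
    (hI : ∀ x ∈ I, ∀ y, G.Adj x y → y ∈ I ∨ y = v ∨ y = d ∨ y = e)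
    {u w : Fin n} (hu : u ∈ I) (huw : G.Adj u w)
    (hsep : ¬ (G.induce {t : Fin n | t ∉ ({v, u, w} : Set (Fin n))}).Connected) (hwd : w ≠ d) :
    ∃ K : Set (Fin n), K.Nonempty ∧ K ⊂ I ∧ v ∉ K ∧ u ∉ K ∧ w ∉ K ∧
      ∀ x ∈ K, ∀ y, G.Adj x y → y ∈ K ∨ y = v ∨ y = u ∨ y = w := by
  set S : Set (Fin n) := {t | t ∉ ({v, u, w} : Set (Fin n))} with hS
  have hdu : d ≠ u := fun h => hdI (h ▸ hu)
  have heu : e ≠ u := fun h => heI (h ▸ hu)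
  have memS : ∀ t, t ∈ S ↔ t ≠ v ∧ t ≠ u ∧ t ≠ w := fun t => by simp [hS]
  have hdS : d ∈ S := (memS d).2 ⟨hvd.ne', hdu, hwd.symm⟩
  let R : Set (Fin n) := {t | ∃ ht : t ∈ S, (G.induce S).Reachable ⟨d, hdS⟩ ⟨t, ht⟩}
  have hR : ∀ t ∈ R, ∀ t' ∈ S, G.Adj t t' → t' ∈ R := by
    rintro t ⟨ht, hr⟩ t' ht' hadj
    exact ⟨ht', hr.trans (SimpleGraph.Adj.reachable (by simpa using hadj))⟩
  have hdR : d ∈ R := ⟨hdS, SimpleGraph.Reachable.refl _⟩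
  have hwID : w ∈ I ∨ w = v ∨ w = d ∨ w = e := hI u hu w huw
  have heR : e ∈ S → e ∈ R := fun he => hR d hdR e he hde
  have outR : ∀ t, t ∈ S → t ∉ I → t ∈ R := by
    by_contra! hbad
    obtain ⟨t₀, ht₀S, ht₀I, ht₀R⟩ := hbad
    have hMmem : t₀ ∈ {t | t ∈ S ∧ t ∉ I ∧ t ∉ R} := ⟨ht₀S, ht₀I, ht₀R⟩
    obtain ⟨m, ⟨hmS, hmI, hmR⟩, hdm⟩ := hG.exists_adj_mem_side hvd.symm hde hve
      (K := {t | t ∈ S ∧ t ∉ I ∧ t ∉ R}) ⟨t₀, hMmem⟩ (fun h => h.2.2 hdR)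
      (fun h => ((memS v).1 h.1).1 rfl) (fun h => h.2.2 (heR h.1)) (by
        rintro x ⟨hxS, hxI, hxR⟩ y hxy
        by_contra! hy
        obtain ⟨hy1, hyd, hyv, hye⟩ := hy
        have hx := (memS x).1 hxS
        by_cases hyI : y ∈ I
        · rcases hI y hyI x hxy.symm with h | h | h | h
          · exact hxI h
          · exact hx.1 h
          · exact hxR (h ▸ hdR)
          · subst h
            exact hxR (heR hxS)
        have hyS : y ∈ S := by
          refine (memS y).2 ⟨hyv, fun h => hyI (h ▸ hu), ?_⟩
          rintro rfl
          rcases hwID with h | h | h | h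
          exacts [hyI h, hyv h, hyd h, hye h]
        by_cases hyR : y ∈ R
        · exact hxR (hR y hyR x hxS hxy.symm)
        · exact hy1 ⟨hyS, hyI, hyR⟩)
    exact hmR (hR d hdR m hmS hdm)
  have hsub : {t | t ∈ S ∧ t ∉ R} ⊆ I := by
    rintro t ⟨htS, htR⟩
    by_contra htI
    exact htR (outR t htS htI)
  refine ⟨{t | t ∈ S ∧ t ∉ R}, ?_, ⟨hsub, fun h => ((memS u).1 (h hu).1).2.1 rfl⟩,
    fun h => ((memS v).1 h.1).1 rfl, fun h => ((memS u).1 h.1).2.1 rfl,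
    fun h => ((memS w).1 h.1).2.2 rfl, ?_⟩
  · by_contra hempty
    have hall : ∀ t ∈ S, t ∈ R := fun t ht => by
      by_contra h
      exact hempty ⟨t, ht, h⟩
    refine hsep ((SimpleGraph.connected_iff_exists_forall_reachable _).2 ⟨⟨d, hdS⟩, ?_⟩)
    rintro ⟨t, ht⟩
    exact (hall t ht).2
  · rintro x ⟨hxS, hxR⟩ y hxy
    by_contra! hy
    have hyS : y ∈ S := (memS y).2 hy.2
    refine hy.1 ⟨hyS, fun hyR => hxR (hR y hyR x hxS hxy.symm)⟩

/-- Every vertex of a triangle is incident to a free edge into every side of the triangle. -/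
theorem IsTriangulation.exists_free_edge {n : ℕ} {G : SimpleGraph (Fin n)}
    (hG : IsTriangulation G) {v : Fin n} {I : Set (Fin n)} (hne : I.Nonempty) (hvI : v ∉ I)
    {d e : Fin n} (hvd : G.Adj v d) (hve : G.Adj v e) (hde : G.Adj d e) (hdI : d ∉ I) (heI : e ∉ I)
    (hI : ∀ x ∈ I, ∀ y, G.Adj x y → y ∈ I ∨ y = v ∨ y = d ∨ y = e) :
    ∃ u ∈ I, G.Adj v u ∧
      ¬ ∃ x y z : Fin n, IsSepTriangle G x y z ∧
        s(v, u) ∈ ({s(x, y), s(y, z), s(x, z)} : Set (Sym2 (Fin n))) := by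
  induction I using WellFoundedLT.induction generalizing d e with
  | ind I ih =>
    obtain ⟨u, hu, hvu⟩ := hG.exists_adj_mem_side hvd hve hde hne hvI hdI heI hI
    by_cases hfree : ∃ x y z : Fin n, IsSepTriangle G x y z ∧
        s(v, u) ∈ ({s(x, y), s(y, z), s(x, z)} : Set (Sym2 (Fin n)))
    swap
    · exact ⟨u, hu, hvu, hfree⟩
    obtain ⟨w, hvw, huw, hsep⟩ := exists_third_vertex hfree
    obtain ⟨K, hKne, hKI, hvK, huK, hwK, hK⟩ : ∃ K : Set (Fin n), K.Nonempty ∧ K ⊂ I ∧ v ∉ K ∧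
        u ∉ K ∧ w ∉ K ∧ ∀ x ∈ K, ∀ y, G.Adj x y → y ∈ K ∨ y = v ∨ y = u ∨ y = w := by
      by_cases hwd : w = d
      · have hwe : w ≠ e := hwd ▸ hde.ne
        exact hG.exists_smaller_side hve hvd hde.symm heI hdI
          (fun x hx y hxy => (hI x hx y hxy).imp_right (Or.imp_right Or.symm))
          hu huw hsep hwe
      · exact hG.exists_smaller_side hvd hve hde hdI heI hI hu huw hsep hwd
    obtain ⟨u', hu', h⟩ := ih K hKI hKne hvK hvu hvw huw huK hwK hK
    exact ⟨u', hKI.1 hu', h⟩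

/-- Every vertex of a separating triangle is incident to a free edge (an edge
lying on no separating triangle) inside the triangle.  Here a "side" I of the
triangle is a nonempty set of vertices, disjoint from the triangle, whose only
outside neighbours are triangle vertices; the interior is such a side. -/
theorem sepTriangle_free_edge_inside
    (n : ℕ) (G : SimpleGraph (Fin n)) (hG : IsTriangulation G)
    (a b c : Fin n) (hD : IsSepTriangle G a b c)
    (I : Set (Fin n)) (hne : I.Nonempty)
    (hIdisj : ∀ x ∈ I, x ∉ ({a, b, c} : Set (Fin n)))
    (hIclosed : ∀ x ∈ I, ∀ y : Fin n, G.Adj x y →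
      y ∈ I ∨ y ∈ ({a, b, c} : Set (Fin n)))
    (hIconn : (G.induce I).Connected) :
    ∀ v ∈ ({a, b, c} : Set (Fin n)), ∃ u ∈ I, G.Adj v u ∧
      ¬ ∃ x y z : Fin n, IsSepTriangle G x y z ∧
        s(v, u) ∈ ({s(x, y), s(y, z), s(x, z)} : Set (Sym2 (Fin n))) := by
  obtain ⟨hab, hbc, hac, -⟩ := hD
  have haI : a ∉ I := fun h => hIdisj a h (by simp)
  have hbI : b ∉ I := fun h => hIdisj b h (by simp)
  have hcI : c ∉ I := fun h => hIdisj c h (by simp)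
  simp only [Set.mem_insert_iff, Set.mem_singleton_iff] at hIclosed
  rintro v (rfl | rfl | rfl)
  · exact hG.exists_free_edge hne haI hab hac hbc hbI hcI hIclosed
  · exact hG.exists_free_edge hne hbI hab.symm hbc hac haI hcI
      fun x hx y hxy => (hIclosed x hx y hxy).imp_right or_left_comm.1
  · exact hG.exists_free_edge hne hcI hac.symm hbc.symm hab haI hbI
      fun x hx y hxy => (hIclosed x hx y hxy).imp_right or_rotate.2
end
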